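/- arXiv:1212.0719 — 2 statements merged into one kernel-verified Lean document; each statement's English description precedes it below -/
import Mathlib

section
/- Under the hypotheses of the semilocal convergence theorem for Halley's method (F : D → Y twice continuously Fréchet differentiable between Banach spaces, x₀ ∈ D with F'(x₀) invertible, h a majorizing function to F at x₀ satisfying (A1)–(A3) with smallest zero t*), let (x_k) be the Halley sequence converging to the solution x*, and let (t_k) be the majorizing sequence with t_k → t*. Then the error bound ‖x* − x_{k+1}‖ ≤ (t* − t_{k+1})·(‖x* − x_k‖/(t* − t_k))³ holds for all k ≥ 0, and consequently (x_k) converges Q-cubically: ‖x* − x_{k+1}‖ ≤ [ (1/3)·h''(t*)²/h'(t*)² + (2/9)·D⁻h''(t*)/(−h'(t*)) ]·‖x* − x_k‖³ for all k ≥ 0. -/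
open Metric Set

/-!
The scalar and the vector Halley steps solve the same linear equations: with Newton step `p`, the
Halley step `d` from `x` satisfies `F'(x) p = -F(x)` and `F'(x) d + ½ F''(x) p d = -F(x)`, and the
same holds for `h` at `t`. If `‖x - x₀‖ ≤ t` and `‖F(x)‖ ≤ h(t)`, every vector quantity in these
equations is bounded by its scalar counterpart, so the step `d` is dominated by the scalar step and
both bounds persist.

For the error put `ε = x* - x`, `τ = t* - t` and `r = ‖ε‖ / τ`. With `Q` the second-order Taylor
remainder of `F` along `ε`, expanding `F(x*) = 0` gives
`F'(x) (ε - p) = -(½ F''(x) ε ε + Q)` and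
`F'(x) (ε - d) + ½ F''(x) p (ε - d) = -(½ F''(x) (ε - p) ε + Q)`.
Convexity of `h''` gives `‖Q‖ ≤ r³ · (remainder of h along τ)`, hence `‖ε - p‖` is at most `r²`
times its scalar counterpart and `‖ε - d‖` at most `r³` times its own, which is the first bound.
The Q-cubic constant comes from estimating the scalar gap `t* - t_{k+1}`, where `2 h h'' ≤ h'²`
keeps the scalar denominator above `-¾ h'`.
-/

section Comparison

variable {E G : Type*} [NormedAddCommGroup E] [NormedSpace ℝ E]
  [NormedAddCommGroup G] [NormedSpace ℝ G]

lemma norm_le_of_norm_derivWithin_le {f f' : ℝ → E} {g g' : ℝ → ℝ} {a b : ℝ}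
    (hf : ∀ s ∈ Icc a b, HasDerivWithinAt f (f' s) (Icc a b) s)
    (hg : ∀ s ∈ Icc a b, HasDerivWithinAt g (g' s) (Icc a b) s)
    (ha : ‖f a‖ ≤ g a) (hle : ∀ s ∈ Icc a b, ‖f' s‖ ≤ g' s) :
    ∀ s ∈ Icc a b, ‖f s‖ ≤ g s := fun _ hs =>
  image_norm_le_of_norm_deriv_right_le_deriv_boundary'
    (fun s hs => (hf s hs).continuousWithinAt)
    (fun s hs => (hf s (Ico_subset_Icc_self hs)).mono_of_mem_nhdsWithin (Icc_mem_nhdsGE_of_mem hs))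
    ha (fun s hs => (hg s hs).continuousWithinAt)
    (fun s hs => (hg s (Ico_subset_Icc_self hs)).mono_of_mem_nhdsWithin (Icc_mem_nhdsGE_of_mem hs))
    (fun s hs => hle s (Ico_subset_Icc_self hs)) hs

lemma norm_taylor_two_le_of_norm_deriv_two_sub_le {γ γ' γ'' : ℝ → E} {g g' g'' : ℝ → ℝ}
    (hγ : ∀ s ∈ Icc (0 : ℝ) 1, HasDerivWithinAt γ (γ' s) (Icc 0 1) s)
    (hγ' : ∀ s ∈ Icc (0 : ℝ) 1, HasDerivWithinAt γ' (γ'' s) (Icc 0 1) s)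
    (hg : ∀ s ∈ Icc (0 : ℝ) 1, HasDerivWithinAt g (g' s) (Icc 0 1) s)
    (hg' : ∀ s ∈ Icc (0 : ℝ) 1, HasDerivWithinAt g' (g'' s) (Icc 0 1) s)
    (hle : ∀ s ∈ Icc (0 : ℝ) 1, ‖γ'' s - γ'' 0‖ ≤ g'' s - g'' 0) :
    ‖γ 1 - γ 0 - γ' 0 - (2⁻¹ : ℝ) • γ'' 0‖ ≤ g 1 - g 0 - g' 0 - 2⁻¹ * g'' 0 := by
  have first_order : ∀ s ∈ Icc (0 : ℝ) 1,
      ‖γ' s - γ' 0 - s • γ'' 0‖ ≤ g' s - g' 0 - s * g'' 0 :=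
    norm_le_of_norm_derivWithin_le
      (fun s hs => (((hγ' s hs).sub_const _).sub
        ((hasDerivWithinAt_id s _).smul_const _)).congr_deriv (by simp))
      (fun s hs => (((hg' s hs).sub_const _).sub
        ((hasDerivWithinAt_id s _).mul_const _)).congr_deriv (by simp))
      (by simp) hle
  have second_order := norm_le_of_norm_derivWithin_le
    (f := fun s => γ s - γ 0 - s • γ' 0 - (s ^ 2 / 2) • γ'' 0)
    (g := fun s => g s - g 0 - s * g' 0 - s ^ 2 / 2 * g'' 0)
    (fun s hs => ((((hγ s hs).sub_const _).sub ((hasDerivWithinAt_id s _).smul_const _)).sub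
      ((((hasDerivAt_id s).pow 2).div_const 2).hasDerivWithinAt.smul_const _)).congr_deriv
        (by simp))
    (fun s hs => ((((hg s hs).sub_const _).sub ((hasDerivWithinAt_id s _).mul_const _)).sub
      ((((hasDerivAt_id s).pow 2).div_const 2).hasDerivWithinAt.mul_const _)).congr_deriv
        (by simp))
    (by simp) first_order 1 (by simp)
  simpa using second_order

lemma hasDerivWithinAt_comp_segment {f : E → G} {f' : E → E →L[ℝ] G} {S : Set E}
    (hS : Convex ℝ S) (hf : ∀ x ∈ S, HasFDerivWithinAt f (f' x) S x) {x v : E}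
    (hx : x ∈ S) (hxv : x + v ∈ S) {s : ℝ} (hs : s ∈ Icc (0 : ℝ) 1) :
    HasDerivWithinAt (fun s : ℝ => f (x + s • v)) (f' (x + s • v) v) (Icc 0 1) s := by
  have hline : HasDerivWithinAt (fun s : ℝ => x + s • v) v (Icc 0 1) s := by
    simpa using ((hasDerivWithinAt_id s _).smul_const v).const_add x
  exact (hf _ (hS.add_smul_mem hx hxv hs)).comp_hasDerivWithinAt s hline
    fun _ hr => hS.add_smul_mem hx hxv hr

lemma hasDerivWithinAt_comp_real_segment {f f' : ℝ → ℝ} {S : Set ℝ} (hS : Convex ℝ S)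
    (hf : ∀ x ∈ S, HasDerivWithinAt f (f' x) S x) {x v : ℝ} (hx : x ∈ S) (hxv : x + v ∈ S)
    {s : ℝ} (hs : s ∈ Icc (0 : ℝ) 1) :
    HasDerivWithinAt (fun s => f (x + s * v)) (f' (x + s * v) * v) (Icc 0 1) s := by
  simpa [mul_comm v] using
    hasDerivWithinAt_comp_segment hS (fun y hy => (hf y hy).hasFDerivWithinAt) hx hxv hs

end Comparison

section ConvexIncrements

variable {S : Set ℝ} {f : ℝ → ℝ}

lemma increment_mono_of_convexOn (hf : ConvexOn ℝ S f) {a b δ : ℝ} (ha : a ∈ S)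
    (hbδ : b + δ ∈ S) (hab : a ≤ b) (hδ : 0 ≤ δ) : f (a + δ) - f a ≤ f (b + δ) - f b := by
  rcases hδ.eq_or_lt with rfl | hδ
  · simp
  have haδ : a + δ ∈ S := hf.1.ordConnected.out ha hbδ ⟨by linarith, by linarith⟩
  have hb : b ∈ S := hf.1.ordConnected.out ha hbδ ⟨hab, by linarith⟩
  have hslope : slope f a (a + δ) ≤ slope f b (b + δ) :=
    calc slope f a (a + δ) ≤ slope f a (b + δ) :=
          hf.slope_mono ha ⟨haδ, by simp [hδ.ne']⟩
            ⟨hbδ, by simp only [mem_singleton_iff]; linarith⟩ (by linarith)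
      _ = slope f (b + δ) a := slope_comm ..
      _ ≤ slope f (b + δ) b :=
          hf.slope_mono hbδ ⟨ha, by simp only [mem_singleton_iff]; linarith⟩
            ⟨hb, by simp [hδ.ne']⟩ hab
      _ = slope f b (b + δ) := slope_comm ..
  simpa [slope_def_field, div_le_div_iff_of_pos_right hδ] using hslope

lemma increment_mul_le_of_convexOn (hf : ConvexOn ℝ S f) {a u r : ℝ} (ha : a ∈ S)
    (hau : a + u ∈ S) (hr : r ∈ Icc (0 : ℝ) 1) :
    f (a + r * u) - f a ≤ r * (f (a + u) - f a) := by
  have hconv := hf.2 ha hau (sub_nonneg.2 hr.2) hr.1 (by ring)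
  have hpoint : (1 - r) • a + r • (a + u) = a + r * u := by simp only [smul_eq_mul]; ring
  rw [hpoint, smul_eq_mul, smul_eq_mul] at hconv
  linarith

/-- The left derivative `D⁻f(T)` of a function convex on a neighbourhood of `[a, T]`, written as the
supremum of the slopes from the left. Points below `a` do not matter, as the slopes increase. -/
noncomputable def leftDerivSup (f : ℝ → ℝ) (a T : ℝ) : ℝ :=
  sSup ((fun u => (f T - f u) / (T - u)) '' Ico a T)

lemma leftDerivSup_nonneg {a T : ℝ} (hf : ∀ u ∈ Ico a T, f u ≤ f T) : 0 ≤ leftDerivSup f a T := by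
  refine Real.sSup_nonneg ?_
  rintro _ ⟨u, hu, rfl⟩
  exact div_nonneg (sub_nonneg.2 (hf u hu)) (sub_pos.2 hu.2).le

lemma sub_le_leftDerivSup_mul {a b T u : ℝ} (hf : ConvexOn ℝ (Ico a b) f) (hTb : T < b)
    (hu : u ∈ Ico a T) : f T - f u ≤ leftDerivSup f a T * (T - u) := by
  obtain ⟨c, hTc, hcb⟩ := exists_between hTb
  have hbdd : BddAbove ((fun u => (f T - f u) / (T - u)) '' Ico a T) := by
    refine ⟨(f c - f T) / (c - T), ?_⟩
    rintro _ ⟨v, hv, rfl⟩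
    exact hf.slope_mono_adjacent ⟨hv.1, hv.2.trans hTb⟩
      ⟨(hv.1.trans hv.2.le).trans hTc.le, hcb⟩ hv.2 hTc
  exact (div_le_iff₀ (sub_pos.2 hu.2)).1 (le_csSup hbdd (mem_image_of_mem _ hu))

end ConvexIncrements

/-- The second-order Taylor remainder of `h` at `a` for the increment `δ`; `h'` and `h''` stand for
the first two derivatives of `h`. -/
noncomputable def taylorRemainder (h h' h'' : ℝ → ℝ) (a δ : ℝ) : ℝ :=
  h (a + δ) - (h a + h' a * δ + h'' a * δ ^ 2 / 2)

/-- A scalar function `h` on `[0, R)` with derivatives `h'` and `h''`, the latter convex, increasing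
and positive: the part of assumptions (A1) and (A2) on a majorizing function that controls Taylor
remainders. -/
structure ConvexMajorant (h h' h'' : ℝ → ℝ) (R : ℝ) : Prop where
  hasDerivWithinAt : ∀ s ∈ Ico 0 R, HasDerivWithinAt h (h' s) (Ico 0 R) s
  hasDerivWithinAt' : ∀ s ∈ Ico 0 R, HasDerivWithinAt h' (h'' s) (Ico 0 R) s
  convexOn : ConvexOn ℝ (Ico 0 R) h''
  monotoneOn : MonotoneOn h'' (Ico 0 R)
  deriv_two_zero_pos : 0 < h'' 0

namespace ConvexMajorant

variable {h h' h'' : ℝ → ℝ} {R a b δ u : ℝ}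

lemma deriv_two_pos (H : ConvexMajorant h h' h'' R) (ha : a ∈ Ico 0 R) : 0 < h'' a :=
  H.deriv_two_zero_pos.trans_le (H.monotoneOn ⟨le_rfl, ha.1.trans_lt ha.2⟩ ha ha.1)

lemma deriv_monotoneOn (H : ConvexMajorant h h' h'' R) : MonotoneOn h' (Ico 0 R) :=
  monotoneOn_of_hasDerivWithinAt_nonneg (convex_Ico 0 R)
    (fun s hs => (H.hasDerivWithinAt' s hs).continuousWithinAt)
    (fun s hs => (H.hasDerivWithinAt' s (interior_subset hs)).mono interior_subset)
    (fun _ hs => (H.deriv_two_pos (interior_subset hs)).le)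

lemma increment_nonneg (H : ConvexMajorant h h' h'' R) (ha : 0 ≤ a) (hδ : 0 ≤ δ)
    (haδ : a + δ < R) : 0 ≤ h'' (a + δ) - h'' a :=
  sub_nonneg.2 (H.monotoneOn ⟨ha, by linarith⟩ ⟨by linarith, haδ⟩ (by linarith))

lemma hasDerivWithinAt_segment (H : ConvexMajorant h h' h'' R) (ha : 0 ≤ a) (hδ : 0 ≤ δ)
    (haδ : a + δ < R) {s : ℝ} (hs : s ∈ Icc (0 : ℝ) 1) :
    HasDerivWithinAt (fun s => h (a + s * δ)) (h' (a + s * δ) * δ) (Icc 0 1) s :=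
  hasDerivWithinAt_comp_real_segment (convex_Ico 0 R) H.hasDerivWithinAt
    ⟨ha, by linarith⟩ ⟨by linarith, haδ⟩ hs

lemma hasDerivWithinAt_segment' (H : ConvexMajorant h h' h'' R) (ha : 0 ≤ a) (hδ : 0 ≤ δ)
    (haδ : a + δ < R) {s : ℝ} (hs : s ∈ Icc (0 : ℝ) 1) :
    HasDerivWithinAt (fun s => h' (a + s * δ)) (h'' (a + s * δ) * δ) (Icc 0 1) s :=
  hasDerivWithinAt_comp_real_segment (convex_Ico 0 R) H.hasDerivWithinAt'
    ⟨ha, by linarith⟩ ⟨by linarith, haδ⟩ hs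

lemma norm_taylor_two_le (H : ConvexMajorant h h' h'' R) {E : Type*} [NormedAddCommGroup E]
    [NormedSpace ℝ E] {γ γ' γ'' : ℝ → E} {c : ℝ} (ha : 0 ≤ a) (hδ : 0 ≤ δ) (haδ : a + δ < R)
    (hγ : ∀ s ∈ Icc (0 : ℝ) 1, HasDerivWithinAt γ (γ' s) (Icc 0 1) s)
    (hγ' : ∀ s ∈ Icc (0 : ℝ) 1, HasDerivWithinAt γ' (γ'' s) (Icc 0 1) s)
    (hle : ∀ s ∈ Icc (0 : ℝ) 1,
      ‖γ'' s - γ'' 0‖ ≤ c * ((h'' (a + s * δ) - h'' a) * δ ^ 2)) :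
    ‖γ 1 - γ 0 - γ' 0 - (2⁻¹ : ℝ) • γ'' 0‖ ≤ c * taylorRemainder h h' h'' a δ := by
  have key := norm_taylor_two_le_of_norm_deriv_two_sub_le hγ hγ'
    (fun s hs => (H.hasDerivWithinAt_segment ha hδ haδ hs).const_mul c)
    (fun s hs => ((H.hasDerivWithinAt_segment' ha hδ haδ hs).mul_const δ).const_mul c)
    (fun s hs => (hle s hs).trans_eq (by simp only [zero_mul, add_zero]; ring))
  refine key.trans_eq ?_
  simp only [taylorRemainder, one_mul, zero_mul, add_zero]
  ring

lemma taylorRemainder_nonneg (H : ConvexMajorant h h' h'' R) (ha : 0 ≤ a) (hδ : 0 ≤ δ)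
    (haδ : a + δ < R) : 0 ≤ taylorRemainder h h' h'' a δ := by
  have key := H.norm_taylor_two_le (γ := fun _ => (0 : ℝ)) (γ' := fun _ => 0) (γ'' := fun _ => 0)
    (c := 1) ha hδ haδ (fun _ _ => hasDerivWithinAt_const ..) (fun _ _ => hasDerivWithinAt_const ..)
    (fun s hs => by
      have hsδ : s * δ ≤ δ := mul_le_of_le_one_left hδ hs.2
      have := H.increment_nonneg ha (mul_nonneg hs.1 hδ) (by linarith)
      simpa using by positivity)
  simpa using key

lemma taylorRemainder_mul_le (H : ConvexMajorant h h' h'' R) {r : ℝ} (hr : r ∈ Icc (0 : ℝ) 1)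
    (ha : 0 ≤ a) (hu : 0 ≤ u) (hau : a + u < R) :
    taylorRemainder h h' h'' a (r * u) ≤ r ^ 3 * taylorRemainder h h' h'' a u := by
  have hru : 0 ≤ r * u := mul_nonneg hr.1 hu
  have hau' : a + r * u < R := by linarith [mul_le_of_le_one_left hu hr.2]
  have key := H.norm_taylor_two_le (c := r ^ 3) ha hu hau
    (fun s hs => H.hasDerivWithinAt_segment ha hru hau' hs)
    (fun s hs => (H.hasDerivWithinAt_segment' ha hru hau' hs).mul_const (r * u))
    (fun s hs => by
      have hsu : s * u ≤ u := mul_le_of_le_one_left hu hs.2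
      have hsru : s * (r * u) ≤ r * u := mul_le_of_le_one_left hru hs.2
      have hnonneg := H.increment_nonneg ha (mul_nonneg hs.1 hru) (by linarith)
      have hscale := increment_mul_le_of_convexOn H.convexOn (a := a) (u := s * u)
        ⟨ha, by linarith⟩ ⟨by linarith [mul_nonneg hs.1 hu], by linarith⟩ hr
      calc ‖h'' (a + s * (r * u)) * (r * u) * (r * u) - h'' (a + 0 * (r * u)) * (r * u) * (r * u)‖
          = (h'' (a + s * (r * u)) - h'' a) * (r * u) ^ 2 := by
            rw [zero_mul, add_zero, ← sub_mul, ← sub_mul, mul_assoc, ← sq, Real.norm_of_nonneg]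
            positivity
        _ ≤ r * (h'' (a + s * u) - h'' a) * (r * u) ^ 2 := by
            rw [mul_left_comm s r u]; gcongr
        _ = r ^ 3 * ((h'' (a + s * u) - h'' a) * u ^ 2) := by ring)
  refine (le_abs_self _).trans (le_of_eq_of_le (congrArg abs ?_) key)
  simp only [taylorRemainder, one_mul, zero_mul, add_zero, smul_eq_mul]
  ring

lemma taylorRemainder_le_div_cube_mul (H : ConvexMajorant h h' h'' R) (ha : 0 ≤ a)
    (hδ : 0 ≤ δ) (hδu : δ ≤ u) (hu : 0 < u) (hau : a + u < R) :
    taylorRemainder h h' h'' a δ ≤ (δ / u) ^ 3 * taylorRemainder h h' h'' a u := by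
  simpa [div_mul_cancel₀ δ hu.ne'] using
    H.taylorRemainder_mul_le ⟨by positivity, (div_le_one hu).2 hδu⟩ ha hu.le hau

lemma taylorRemainder_mono (H : ConvexMajorant h h' h'' R) (ha : 0 ≤ a) (hδ : 0 ≤ δ)
    (hδu : δ ≤ u) (hau : a + u < R) :
    taylorRemainder h h' h'' a δ ≤ taylorRemainder h h' h'' a u := by
  rcases hδu.eq_or_lt with rfl | hlt
  · rfl
  have hu : 0 < u := hδ.trans_lt hlt
  exact (H.taylorRemainder_le_div_cube_mul ha hδ hδu hu hau).trans <|
    mul_le_of_le_one_left (H.taylorRemainder_nonneg ha hu.le hau)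
      (pow_le_one₀ (by positivity) ((div_le_one hu).2 hδu))

lemma taylorRemainder_le (H : ConvexMajorant h h' h'' R) (ha : 0 ≤ a) (hu : 0 ≤ u)
    (hau : a + u < R) : taylorRemainder h h' h'' a u ≤ u ^ 2 / 6 * (h'' (a + u) - h'' a) := by
  set c := u ^ 2 / 6 * (h'' (a + u) - h'' a) with hc
  have key := norm_taylor_two_le_of_norm_deriv_two_sub_le
    (g := fun s => s ^ 3 * c) (g' := fun s => 3 * s ^ 2 * c) (g'' := fun s => 6 * s * c)
    (fun s hs => H.hasDerivWithinAt_segment ha hu hau hs)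
    (fun s hs => (H.hasDerivWithinAt_segment' ha hu hau hs).mul_const u)
    (fun s _ => by simpa using ((hasDerivAt_id s).pow 3).hasDerivWithinAt.mul_const c)
    (fun s _ => by
      refine ((((hasDerivAt_id s).pow 2).const_mul 3).hasDerivWithinAt.mul_const c).congr_deriv ?_
      simp only [id_eq, Nat.cast_ofNat, Nat.add_one_sub_one, pow_one, mul_one]
      ring)
    (fun s hs => by
      have hsu : s * u ≤ u := mul_le_of_le_one_left hu hs.2
      have hnonneg := H.increment_nonneg ha (mul_nonneg hs.1 hu) (by linarith)
      have hscale := increment_mul_le_of_convexOn H.convexOn ⟨ha, by linarith⟩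
        ⟨by linarith, hau⟩ hs
      calc ‖h'' (a + s * u) * u * u - h'' (a + 0 * u) * u * u‖
          = (h'' (a + s * u) - h'' a) * u ^ 2 := by
            rw [zero_mul, add_zero, ← sub_mul, ← sub_mul, mul_assoc, ← sq, Real.norm_of_nonneg]
            positivity
        _ ≤ s * (h'' (a + u) - h'' a) * u ^ 2 := by gcongr
        _ = 6 * s * c - 6 * 0 * c := by rw [hc]; ring)
  refine (le_abs_self _).trans ((le_of_eq_of_le (congrArg abs ?_) key).trans_eq (by simp))
  simp only [taylorRemainder, one_mul, zero_mul, add_zero, smul_eq_mul]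
  ring

end ConvexMajorant

/-- The scalar Newton step `-h(a) / h'(a)`. -/
noncomputable def newtonStep (h h' : ℝ → ℝ) (a : ℝ) : ℝ := (-h' a)⁻¹ * h a

/-- The denominator `-h'(a) (1 - L_h(a))` of the scalar Halley step, with `L_h(a)` expressed through
the Newton step. -/
noncomputable def halleyDenom (h h' h'' : ℝ → ℝ) (a : ℝ) : ℝ :=
  -h' a - 2⁻¹ * (h'' a * newtonStep h h' a)

lemma halleyDenom_eq (h h' h'' : ℝ → ℝ) (a : ℝ) :
    halleyDenom h h' h'' a = -(h' a * (1 - h a * h'' a / (2 * h' a ^ 2))) := by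
  rcases eq_or_ne (h' a) 0 with h0 | h0
  · simp [halleyDenom, newtonStep, h0]
  · rw [halleyDenom, newtonStep]
    field_simp
    ring

/-- The increment `t_{k+1} - t_k` of the majorizing sequence at `t_k = a`. -/
noncomputable def halleyStep (h h' h'' : ℝ → ℝ) (a : ℝ) : ℝ := h a / halleyDenom h h' h'' a

lemma sub_halley_correction_eq_add_halleyStep (h h' h'' : ℝ → ℝ) (a : ℝ) :
    a - 1 / (1 - h a * h'' a / (2 * h' a ^ 2)) * (h a / h' a) = a + halleyStep h h' h'' a := by
  rw [halleyStep, halleyDenom_eq, mul_comm (h' a), div_neg, ← sub_eq_add_neg, div_mul_div_comm,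
    one_mul]

/-- A majorizing function in the sense of (A1)–(A3), with `T` its smallest zero in `(0, R)`. The
normalization `h'(0) = -1` is encoded in `IsMajorizedBy`, as a relation between `h'(0)` and the
derivative of the operator. -/
structure HalleyMajorant (h h' h'' : ℝ → ℝ) (R T : ℝ) : Prop extends
    ConvexMajorant h h' h'' R where
  zero_pos : 0 < h 0
  mem_Ioo : T ∈ Ioo 0 R
  apply_zero : h T = 0
  le_of_zero : ∀ s ∈ Ioo 0 R, h s = 0 → T ≤ s
  deriv_zero_neg : h' T < 0

namespace HalleyMajorant

variable {h h' h'' : ℝ → ℝ} {R T a : ℝ}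

lemma mem_Ico_radius (H : HalleyMajorant h h' h'' R T) (ha : a ∈ Ico 0 T) : a ∈ Ico 0 R :=
  ⟨ha.1, ha.2.trans H.mem_Ioo.2⟩

lemma deriv_le (H : HalleyMajorant h h' h'' R T) (ha : a ∈ Ico 0 T) : h' a ≤ h' T :=
  H.deriv_monotoneOn (H.mem_Ico_radius ha) ⟨H.mem_Ioo.1.le, H.mem_Ioo.2⟩ ha.2.le

lemma neg_deriv_pos (H : HalleyMajorant h h' h'' R T) (ha : a ∈ Ico 0 T) : 0 < -h' a :=
  neg_pos.2 ((H.deriv_le ha).trans_lt H.deriv_zero_neg)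

lemma pos (H : HalleyMajorant h h' h'' R T) (ha : a ∈ Ico 0 T) : 0 < h a := by
  by_contra! hneg
  have hcont : ContinuousOn h (Icc 0 a) := fun s hs =>
    (H.hasDerivWithinAt s ⟨hs.1, hs.2.trans_lt (H.mem_Ico_radius ha).2⟩).continuousWithinAt.mono
      fun _ hy => ⟨hy.1, hy.2.trans_lt (H.mem_Ico_radius ha).2⟩
  obtain ⟨s, hs, hs0⟩ := intermediate_value_Icc' ha.1 hcont ⟨hneg, H.zero_pos.le⟩
  have hspos : 0 < s := hs.1.lt_of_ne (by rintro rfl; exact H.zero_pos.ne' hs0)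
  have hsT : s < T := hs.2.trans_lt ha.2
  exact hsT.not_ge (H.le_of_zero s ⟨hspos, hsT.trans H.mem_Ioo.2⟩ hs0)

lemma taylorRemainder_gap_nonneg (H : HalleyMajorant h h' h'' R T) (ha : a ∈ Ico 0 T) :
    0 ≤ taylorRemainder h h' h'' a (T - a) :=
  H.taylorRemainder_nonneg ha.1 (sub_nonneg.2 ha.2.le) (by linarith [H.mem_Ioo.2])

lemma taylorRemainder_gap_eq (H : HalleyMajorant h h' h'' R T) (a : ℝ) :
    taylorRemainder h h' h'' a (T - a) =
      -(h a + h' a * (T - a) + h'' a * (T - a) ^ 2 / 2) := by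
  rw [taylorRemainder, add_sub_cancel, H.apply_zero, zero_sub]

lemma taylorRemainder_gap_le (H : HalleyMajorant h h' h'' R T) (ha : a ∈ Ico 0 T) :
    taylorRemainder h h' h'' a (T - a) ≤ (T - a) ^ 2 / 6 * (h'' T - h'' a) := by
  simpa using H.taylorRemainder_le ha.1 (sub_nonneg.2 ha.2.le) (by linarith [H.mem_Ioo.2])

lemma neg_deriv_mul_newtonStep (H : HalleyMajorant h h' h'' R T) (ha : a ∈ Ico 0 T) :
    -h' a * newtonStep h h' a = h a :=
  mul_inv_cancel_left₀ (H.neg_deriv_pos ha).ne' _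

lemma neg_deriv_mul_gap_sub_newtonStep (H : HalleyMajorant h h' h'' R T) (ha : a ∈ Ico 0 T) :
    -h' a * (T - a - newtonStep h h' a) =
      (T - a) ^ 2 / 2 * h'' a + taylorRemainder h h' h'' a (T - a) := by
  rw [mul_sub, H.neg_deriv_mul_newtonStep ha, H.taylorRemainder_gap_eq]
  ring

lemma gap_sub_newtonStep_pos (H : HalleyMajorant h h' h'' R T) (ha : a ∈ Ico 0 T) :
    0 < T - a - newtonStep h h' a := by
  refine pos_of_mul_pos_right ?_ (H.neg_deriv_pos ha).le
  rw [H.neg_deriv_mul_gap_sub_newtonStep ha]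
  have hd2 := H.deriv_two_pos (H.mem_Ico_radius ha)
  have hrem := H.taylorRemainder_gap_nonneg ha
  have hgap : 0 < T - a := sub_pos.2 ha.2
  positivity

lemma two_mul_mul_deriv_two_le_sq (H : HalleyMajorant h h' h'' R T) (ha : a ∈ Ico 0 T) :
    2 * (h a * h'' a) ≤ h' a ^ 2 := by
  have hrem : 0 ≤ h'' a * taylorRemainder h h' h'' a (T - a) :=
    mul_nonneg (H.deriv_two_pos (H.mem_Ico_radius ha)).le (H.taylorRemainder_gap_nonneg ha)
  have hsq : h' a ^ 2 - 2 * (h a * h'' a) = (h' a + h'' a * (T - a)) ^ 2 +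
      2 * (h'' a * taylorRemainder h h' h'' a (T - a)) := by
    rw [H.taylorRemainder_gap_eq]
    ring
  linarith [sq_nonneg (h' a + h'' a * (T - a))]

lemma three_quarters_mul_neg_deriv_le_halleyDenom (H : HalleyMajorant h h' h'' R T)
    (ha : a ∈ Ico 0 T) : 3 / 4 * -h' a ≤ halleyDenom h h' h'' a := by
  have hcorr : h'' a * newtonStep h h' a ≤ 2⁻¹ * -h' a := by
    rw [newtonStep, mul_left_comm, inv_mul_le_iff₀ (H.neg_deriv_pos ha)]
    linarith [H.two_mul_mul_deriv_two_le_sq ha]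
  rw [halleyDenom]
  linarith

lemma halleyDenom_pos (H : HalleyMajorant h h' h'' R T) (ha : a ∈ Ico 0 T) :
    0 < halleyDenom h h' h'' a := by
  linarith [H.three_quarters_mul_neg_deriv_le_halleyDenom ha, H.neg_deriv_pos ha]

lemma halleyStep_pos (H : HalleyMajorant h h' h'' R T) (ha : a ∈ Ico 0 T) :
    0 < halleyStep h h' h'' a :=
  div_pos (H.pos ha) (H.halleyDenom_pos ha)

lemma halleyDenom_mul_halleyStep (H : HalleyMajorant h h' h'' R T) (ha : a ∈ Ico 0 T) :
    halleyDenom h h' h'' a * halleyStep h h' h'' a = h a :=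
  mul_div_cancel₀ _ (H.halleyDenom_pos ha).ne'

lemma neg_deriv_mul_halleyStep_sub_newtonStep (H : HalleyMajorant h h' h'' R T)
    (ha : a ∈ Ico 0 T) :
    -h' a * (halleyStep h h' h'' a - newtonStep h h' a) =
      2⁻¹ * (h'' a * newtonStep h h' a * halleyStep h h' h'' a) := by
  have hstep := H.halleyDenom_mul_halleyStep ha
  rw [halleyDenom] at hstep
  linarith [H.neg_deriv_mul_newtonStep ha]

lemma apply_add_halleyStep (H : HalleyMajorant h h' h'' R T) (ha : a ∈ Ico 0 T) :
    h (a + halleyStep h h' h'' a) =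
      2⁻¹ * (h'' a * (halleyStep h h' h'' a - newtonStep h h' a) * halleyStep h h' h'' a) +
        taylorRemainder h h' h'' a (halleyStep h h' h'' a) := by
  rw [taylorRemainder]
  linarith [H.neg_deriv_mul_halleyStep_sub_newtonStep ha, H.neg_deriv_mul_newtonStep ha]

lemma halleyDenom_mul_next_gap (H : HalleyMajorant h h' h'' R T) (ha : a ∈ Ico 0 T) :
    halleyDenom h h' h'' a * (T - (a + halleyStep h h' h'' a)) =
      2⁻¹ * (h'' a * (T - a - newtonStep h h' a) * (T - a)) +
        taylorRemainder h h' h'' a (T - a) := by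
  rw [← sub_sub, mul_sub, H.halleyDenom_mul_halleyStep ha, H.taylorRemainder_gap_eq, halleyDenom]
  ring

lemma add_halleyStep_mem_Ico (H : HalleyMajorant h h' h'' R T) (ha : a ∈ Ico 0 T) :
    a + halleyStep h h' h'' a ∈ Ico 0 T := by
  refine ⟨add_nonneg ha.1 (H.halleyStep_pos ha).le, sub_pos.1 ?_⟩
  refine pos_of_mul_pos_right ?_ (H.halleyDenom_pos ha).le
  have hrem := H.taylorRemainder_gap_nonneg ha
  have hd2 := H.deriv_two_pos (H.mem_Ico_radius ha)
  have hgap : 0 < T - a := sub_pos.2 ha.2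
  have hnewton := H.gap_sub_newtonStep_pos ha
  rw [H.halleyDenom_mul_next_gap ha]
  positivity

lemma mem_Ico_of_recurrence (H : HalleyMajorant h h' h'' R T) {t : ℕ → ℝ} (ht0 : t 0 = 0)
    (ht : ∀ k, t (k + 1) = t k + halleyStep h h' h'' (t k)) (k : ℕ) : t k ∈ Ico 0 T := by
  induction k with
  | zero => exact ⟨ht0.ge, ht0.trans_lt H.mem_Ioo.1⟩
  | succ k ih => exact ht k ▸ H.add_halleyStep_mem_Ico ih

lemma taylorRemainder_gap_le_cube (H : HalleyMajorant h h' h'' R T) (ha : a ∈ Ico 0 T) :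
    taylorRemainder h h' h'' a (T - a) ≤ leftDerivSup h'' 0 T / 6 * (T - a) ^ 3 :=
  calc taylorRemainder h h' h'' a (T - a)
      ≤ (T - a) ^ 2 / 6 * (h'' T - h'' a) := H.taylorRemainder_gap_le ha
    _ ≤ (T - a) ^ 2 / 6 * (leftDerivSup h'' 0 T * (T - a)) := by
      gcongr
      exact sub_le_leftDerivSup_mul H.convexOn H.mem_Ioo.2 ha
    _ = leftDerivSup h'' 0 T / 6 * (T - a) ^ 3 := by ring

lemma neg_deriv_mul_gap_sub_newtonStep_le (H : HalleyMajorant h h' h'' R T)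
    (ha : a ∈ Ico 0 T) :
    -h' a * (T - a - newtonStep h h' a) ≤ (T - a) ^ 2 / 2 * h'' T := by
  have hmono : h'' a ≤ h'' T :=
    H.monotoneOn (H.mem_Ico_radius ha) ⟨H.mem_Ioo.1.le, H.mem_Ioo.2⟩ ha.2.le
  have hslack : 0 ≤ (T - a) ^ 2 / 3 * (h'' T - h'' a) :=
    mul_nonneg (by positivity) (sub_nonneg.2 hmono)
  rw [H.neg_deriv_mul_gap_sub_newtonStep ha]
  linarith [H.taylorRemainder_gap_le ha]

lemma deriv_two_mul_gap_sub_newtonStep_le (H : HalleyMajorant h h' h'' R T)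
    (ha : a ∈ Ico 0 T) :
    h'' a * (T - a - newtonStep h h' a) ≤ h'' T ^ 2 / (2 * -h' a) * (T - a) ^ 2 := by
  have hT : T ∈ Ico 0 R := ⟨H.mem_Ioo.1.le, H.mem_Ioo.2⟩
  have hpos := H.neg_deriv_pos ha
  calc h'' a * (T - a - newtonStep h h' a)
      ≤ h'' T * (T - a - newtonStep h h' a) :=
        mul_le_mul_of_nonneg_right (H.monotoneOn (H.mem_Ico_radius ha) hT ha.2.le)
          (H.gap_sub_newtonStep_pos ha).le
    _ ≤ h'' T * ((T - a) ^ 2 / 2 * h'' T / -h' a) := by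
        refine mul_le_mul_of_nonneg_left ?_ (H.deriv_two_pos hT).le
        rw [le_div_iff₀' hpos]
        exact H.neg_deriv_mul_gap_sub_newtonStep_le ha
    _ = h'' T ^ 2 / (2 * -h' a) * (T - a) ^ 2 := by
        have hne : h' a ≠ 0 := (neg_pos.1 hpos).ne
        field_simp

lemma three_quarters_mul_neg_deriv_mul_next_gap_le (H : HalleyMajorant h h' h'' R T)
    (ha : a ∈ Ico 0 T) :
    3 / 4 * -h' a * (T - (a + halleyStep h h' h'' a)) ≤
      (h'' T ^ 2 / (4 * -h' a) + leftDerivSup h'' 0 T / 6) * (T - a) ^ 3 :=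
  calc 3 / 4 * -h' a * (T - (a + halleyStep h h' h'' a))
      ≤ halleyDenom h h' h'' a * (T - (a + halleyStep h h' h'' a)) :=
        mul_le_mul_of_nonneg_right (H.three_quarters_mul_neg_deriv_le_halleyDenom ha)
          (sub_nonneg.2 (H.add_halleyStep_mem_Ico ha).2.le)
    _ = 2⁻¹ * (h'' a * (T - a - newtonStep h h' a) * (T - a)) +
          taylorRemainder h h' h'' a (T - a) := H.halleyDenom_mul_next_gap ha
    _ ≤ 2⁻¹ * (h'' T ^ 2 / (2 * -h' a) * (T - a) ^ 2 * (T - a)) +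
          leftDerivSup h'' 0 T / 6 * (T - a) ^ 3 := by
        have hgap : 0 ≤ T - a := sub_nonneg.2 ha.2.le
        exact add_le_add (mul_le_mul_of_nonneg_left (mul_le_mul_of_nonneg_right
          (H.deriv_two_mul_gap_sub_newtonStep_le ha) hgap) (by norm_num))
          (H.taylorRemainder_gap_le_cube ha)
    _ = (h'' T ^ 2 / (4 * -h' a) + leftDerivSup h'' 0 T / 6) * (T - a) ^ 3 := by
        have hne : h' a ≠ 0 := (neg_pos.1 (H.neg_deriv_pos ha)).ne
        field_simp
        ring

lemma next_gap_le_cube (H : HalleyMajorant h h' h'' R T) (ha : a ∈ Ico 0 T) :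
    T - (a + halleyStep h h' h'' a) ≤
      (1 / 3 * (h'' T ^ 2 / h' T ^ 2) + 2 / 9 * (leftDerivSup h'' 0 T / -h' T)) * (T - a) ^ 3 := by
  have hpos := H.neg_deriv_pos ha
  have hposT : 0 < -h' T := neg_pos.2 H.deriv_zero_neg
  have hle : -h' T ≤ -h' a := neg_le_neg (H.deriv_le ha)
  have hgap : 0 ≤ T - a := sub_nonneg.2 ha.2.le
  have hD : 0 ≤ leftDerivSup h'' 0 T := leftDerivSup_nonneg fun u hu =>
    H.monotoneOn (H.mem_Ico_radius hu) ⟨H.mem_Ioo.1.le, H.mem_Ioo.2⟩ hu.2.le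
  calc T - (a + halleyStep h h' h'' a)
      ≤ (h'' T ^ 2 / (4 * -h' a) + leftDerivSup h'' 0 T / 6) * (T - a) ^ 3 / (3 / 4 * -h' a) := by
        rw [le_div_iff₀' (by positivity)]
        exact H.three_quarters_mul_neg_deriv_mul_next_gap_le ha
    _ = (1 / 3 * (h'' T ^ 2 / (-h' a) ^ 2) + 2 / 9 * (leftDerivSup h'' 0 T / -h' a)) *
          (T - a) ^ 3 := by
        have hne : h' a ≠ 0 := (neg_pos.1 hpos).ne
        field_simp
        ring
    _ ≤ (1 / 3 * (h'' T ^ 2 / (-h' T) ^ 2) + 2 / 9 * (leftDerivSup h'' 0 T / -h' T)) *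
          (T - a) ^ 3 := by gcongr
    _ = (1 / 3 * (h'' T ^ 2 / h' T ^ 2) + 2 / 9 * (leftDerivSup h'' 0 T / -h' T)) *
          (T - a) ^ 3 := by rw [neg_sq]

end HalleyMajorant

/-- `h` majorizes `F` at `x₀`. An affine-invariant bound on `F'(x₀)⁻¹ F` is this condition for the
composed operator, so no preconditioner appears; invertibility of `F'(x₀)` is encoded by the lower
bound `le_norm_deriv`. -/
structure IsMajorizedBy {X Y : Type*} [NormedAddCommGroup X] [NormedSpace ℝ X]
    [NormedAddCommGroup Y] [NormedSpace ℝ Y] (F : X → Y) (F' : X → X →L[ℝ] Y)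
    (F'' : X → X →L[ℝ] X →L[ℝ] Y) (x₀ : X) (h h' h'' : ℝ → ℝ) (R : ℝ) : Prop where
  hasFDerivAt : ∀ x ∈ ball x₀ R, HasFDerivAt F (F' x) x
  hasFDerivAt' : ∀ x ∈ ball x₀ R, HasFDerivAt F' (F'' x) x
  norm_deriv_two_sub_le : ∀ x ∈ ball x₀ R, ∀ y ∈ ball x₀ R, ‖y - x‖ + ‖x - x₀‖ < R →
    ‖F'' y - F'' x‖ ≤ h'' (‖y - x‖ + ‖x - x₀‖) - h'' ‖x - x₀‖
  norm_deriv_two_le : ‖F'' x₀‖ ≤ h'' 0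
  le_norm_deriv : ∀ u, -h' 0 * ‖u‖ ≤ ‖F' x₀ u‖
  norm_le : ‖F x₀‖ ≤ h 0

/-- `d` is the Halley step of `F` at `x` and `p` the Newton step, as solutions of linear equations
instead of values of inverse operators. With `p = -F'(x)⁻¹ F(x)` the second equation is
`F'(x) (I - L_F(x)) d = -F(x)`. -/
structure IsHalleyStep {X Y : Type*} [NormedAddCommGroup X] [NormedSpace ℝ X]
    [NormedAddCommGroup Y] [NormedSpace ℝ Y] (F : X → Y) (F' : X → X →L[ℝ] Y)
    (F'' : X → X →L[ℝ] X →L[ℝ] Y) (x p d : X) : Prop where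
  newton : F' x p = -F x
  halley : F' x d + (2⁻¹ : ℝ) • F'' x p d = -F x

/-- The invariant of the iteration: the scalar point `a` dominates both the distance of `x` to the
starting point and, through `h`, the residual at `x`. -/
structure IsMajorizedAt {X Y : Type*} [NormedAddCommGroup X] [NormedAddCommGroup Y] (F : X → Y)
    (x₀ : X) (h : ℝ → ℝ) (x : X) (a : ℝ) : Prop where
  norm_sub_le : ‖x - x₀‖ ≤ a
  norm_apply_le : ‖F x‖ ≤ h a

lemma add_mem_ball_of_norm_sub_le {X : Type*} [SeminormedAddCommGroup X] {x₀ x ε : X} {a R : ℝ}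
    (hx : ‖x - x₀‖ ≤ a) (haε : a + ‖ε‖ < R) : x + ε ∈ ball x₀ R := by
  rw [mem_ball_iff_norm, add_sub_right_comm]
  linarith [norm_add_le (x - x₀) ε]

namespace IsMajorizedBy

variable {X Y : Type*} [NormedAddCommGroup X] [NormedSpace ℝ X] [NormedAddCommGroup Y]
  [NormedSpace ℝ Y] {F : X → Y} {F' : X → X →L[ℝ] Y} {F'' : X → X →L[ℝ] X →L[ℝ] Y} {x₀ : X}
  {h h' h'' : ℝ → ℝ} {R T : ℝ} {x p d ε : X} {a : ℝ}

lemma norm_deriv_two_sub_segment_le (P : IsMajorizedBy F F' F'' x₀ h h' h'' R)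
    (H : ConvexMajorant h h' h'' R) (hx : ‖x - x₀‖ ≤ a) (haε : a + ‖ε‖ < R) :
    ‖F'' (x + ε) - F'' x‖ ≤ h'' (a + ‖ε‖) - h'' a := by
  have hxR : x ∈ ball x₀ R := mem_ball_iff_norm.2 (by linarith [norm_nonneg ε])
  have hxεR : x + ε ∈ ball x₀ R := add_mem_ball_of_norm_sub_le hx haε
  have hlocal := P.norm_deriv_two_sub_le x hxR (x + ε) hxεR
    (by rw [add_sub_cancel_left]; linarith)
  rw [add_sub_cancel_left, add_comm ‖ε‖] at hlocal
  exact hlocal.trans (increment_mono_of_convexOn H.convexOn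
    ⟨norm_nonneg _, mem_ball_iff_norm.1 hxR⟩
    ⟨by linarith [norm_nonneg (x - x₀), norm_nonneg ε], haε⟩ hx (norm_nonneg ε))

lemma norm_deriv_two_le_of_norm_sub_le (P : IsMajorizedBy F F' F'' x₀ h h' h'' R)
    (H : ConvexMajorant h h' h'' R) (hx : ‖x - x₀‖ ≤ a) (ha : a < R) : ‖F'' x‖ ≤ h'' a := by
  have hxR : ‖x - x₀‖ < R := hx.trans_lt ha
  have hsub : ‖F'' x - F'' x₀‖ ≤ h'' ‖x - x₀‖ - h'' 0 := by
    simpa using P.norm_deriv_two_sub_segment_le H (x := x₀) (a := 0) (ε := x - x₀) (by simp)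
      (by simpa using hxR)
  calc ‖F'' x‖ ≤ ‖F'' x₀‖ + ‖F'' x - F'' x₀‖ := norm_le_insert' (F'' x) (F'' x₀)
    _ ≤ h'' ‖x - x₀‖ := by linarith [P.norm_deriv_two_le]
    _ ≤ h'' a := H.monotoneOn ⟨norm_nonneg _, hxR⟩ ⟨(norm_nonneg _).trans hx, ha⟩ hx

lemma norm_deriv_two_apply_le (P : IsMajorizedBy F F' F'' x₀ h h' h'' R)
    (H : ConvexMajorant h h' h'' R) (hx : ‖x - x₀‖ ≤ a) (ha : a < R) {u v : X} {α β : ℝ}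
    (hu : ‖u‖ ≤ α) (hv : ‖v‖ ≤ β) : ‖F'' x u v‖ ≤ h'' a * α * β :=
  ContinuousLinearMap.le_of_opNorm₂_le_of_le _ (P.norm_deriv_two_le_of_norm_sub_le H hx ha) hu hv

lemma norm_deriv_sub_le (P : IsMajorizedBy F F' F'' x₀ h h' h'' R)
    (H : ConvexMajorant h h' h'' R) (hx : ‖x - x₀‖ < R) :
    ‖F' x - F' x₀‖ ≤ h' ‖x - x₀‖ - h' 0 := by
  have hx₀ : x₀ ∈ ball x₀ R := mem_ball_self ((norm_nonneg _).trans_lt hx)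
  have hend : x₀ + (x - x₀) ∈ ball x₀ R := by rwa [add_sub_cancel, mem_ball_iff_norm]
  have key := norm_le_of_norm_derivWithin_le
    (f := fun s : ℝ => F' (x₀ + s • (x - x₀)) - F' x₀)
    (g := fun s => h' (0 + s * ‖x - x₀‖) - h' 0)
    (fun s hs => (hasDerivWithinAt_comp_segment (convex_ball x₀ R)
      (fun y hy => (P.hasFDerivAt' y hy).hasFDerivWithinAt) hx₀ hend hs).sub_const _)
    (fun s hs => (H.hasDerivWithinAt_segment' le_rfl (norm_nonneg _) (by simpa using hx)
      hs).sub_const _)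
    (by simp)
    (fun s hs => by
      have hs' : s * ‖x - x₀‖ < R := (mul_le_of_le_one_left (norm_nonneg _) hs.2).trans_lt hx
      rw [zero_add]
      refine (ContinuousLinearMap.le_opNorm _ _).trans (mul_le_mul_of_nonneg_right ?_
        (norm_nonneg _))
      refine P.norm_deriv_two_le_of_norm_sub_le H ?_ hs'
      simp [norm_smul, abs_of_nonneg hs.1])
    1 (by simp)
  simpa using key

lemma neg_deriv_mul_norm_le (P : IsMajorizedBy F F' F'' x₀ h h' h'' R)
    (H : ConvexMajorant h h' h'' R) (hx : ‖x - x₀‖ ≤ a) (ha : a < R) (u : X) :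
    -h' a * ‖u‖ ≤ ‖F' x u‖ := by
  have hxR : ‖x - x₀‖ < R := hx.trans_lt ha
  have hmono : h' ‖x - x₀‖ ≤ h' a :=
    H.deriv_monotoneOn ⟨norm_nonneg _, hxR⟩ ⟨(norm_nonneg _).trans hx, ha⟩ hx
  have hpert : ‖F' x u - F' x₀ u‖ ≤ (h' a - h' 0) * ‖u‖ :=
    ContinuousLinearMap.le_of_opNorm_le _ ((P.norm_deriv_sub_le H hxR).trans (by linarith)) u
  linarith [P.le_norm_deriv u, norm_le_insert (F' x u) (F' x₀ u)]

lemma norm_taylor_two_le (P : IsMajorizedBy F F' F'' x₀ h h' h'' R)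
    (H : ConvexMajorant h h' h'' R) (hx : ‖x - x₀‖ ≤ a) (haε : a + ‖ε‖ < R) :
    ‖F (x + ε) - F x - F' x ε - (2⁻¹ : ℝ) • F'' x ε ε‖ ≤ taylorRemainder h h' h'' a ‖ε‖ := by
  have hxR : x ∈ ball x₀ R := mem_ball_iff_norm.2 (by linarith [norm_nonneg ε])
  have hxεR : x + ε ∈ ball x₀ R := add_mem_ball_of_norm_sub_le hx haε
  have key := H.norm_taylor_two_le (c := 1) (γ := fun s => F (x + s • ε))
    (γ' := fun s => F' (x + s • ε) ε) (γ'' := fun s => F'' (x + s • ε) ε ε)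
    ((norm_nonneg _).trans hx) (norm_nonneg ε) haε
    (fun s hs => hasDerivWithinAt_comp_segment (convex_ball x₀ R)
      (fun y hy => (P.hasFDerivAt y hy).hasFDerivWithinAt) hxR hxεR hs)
    (fun s hs => by
      simpa using (hasDerivWithinAt_comp_segment (convex_ball x₀ R)
        (fun y hy => (P.hasFDerivAt' y hy).hasFDerivWithinAt) hxR hxεR hs).clm_apply
        (hasDerivWithinAt_const s _ ε))
    (fun s hs => by
      have hnorm : ‖s • ε‖ = s * ‖ε‖ := by rw [norm_smul, Real.norm_of_nonneg hs.1]
      have hsε : s * ‖ε‖ ≤ ‖ε‖ := mul_le_of_le_one_left (norm_nonneg _) hs.2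
      have hincr := P.norm_deriv_two_sub_segment_le H (ε := s • ε) hx (by rw [hnorm]; linarith)
      rw [hnorm] at hincr
      have happly := ContinuousLinearMap.le_of_opNorm₂_le_of_le _ hincr (le_refl ‖ε‖)
        (le_refl ‖ε‖)
      simpa [sq, mul_assoc] using happly)
  simpa using key

lemma norm_taylor_two_le_div_cube_mul (P : IsMajorizedBy F F' F'' x₀ h h' h'' R)
    (H : HalleyMajorant h h' h'' R T) (ha : a ∈ Ico 0 T) (hx : ‖x - x₀‖ ≤ a) (hε : ‖ε‖ ≤ T - a) :
    ‖F (x + ε) - F x - F' x ε - (2⁻¹ : ℝ) • F'' x ε ε‖ ≤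
      (‖ε‖ / (T - a)) ^ 3 * taylorRemainder h h' h'' a (T - a) := by
  have hTR := H.mem_Ioo.2
  exact (P.norm_taylor_two_le H.toConvexMajorant hx (by linarith)).trans
    (H.taylorRemainder_le_div_cube_mul ha.1 (norm_nonneg ε) hε (sub_pos.2 ha.2) (by linarith))

variable (P : IsMajorizedBy F F' F'' x₀ h h' h'' R) (H : HalleyMajorant h h' h'' R T)
  (ha : a ∈ Ico 0 T) (hx : IsMajorizedAt F x₀ h x a) (hs : IsHalleyStep F F' F'' x p d)
include P H ha hx hs

lemma norm_newton_step_le : ‖p‖ ≤ newtonStep h h' a := by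
  rw [newtonStep, le_inv_mul_iff₀ (H.neg_deriv_pos ha)]
  calc -h' a * ‖p‖ ≤ ‖F' x p‖ :=
        P.neg_deriv_mul_norm_le H.toConvexMajorant hx.norm_sub_le (H.mem_Ico_radius ha).2 p
    _ = ‖F x‖ := by rw [hs.newton, norm_neg]
    _ ≤ h a := hx.norm_apply_le

lemma halleyDenom_mul_norm_le (w : X) :
    halleyDenom h h' h'' a * ‖w‖ ≤ ‖F' x w + (2⁻¹ : ℝ) • F'' x p w‖ := by
  have haR := (H.mem_Ico_radius ha).2
  have hderiv := P.neg_deriv_mul_norm_le H.toConvexMajorant hx.norm_sub_le haR w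
  have hcorr : ‖(2⁻¹ : ℝ) • F'' x p w‖ ≤ 2⁻¹ * (h'' a * newtonStep h h' a * ‖w‖) := by
    rw [norm_smul, Real.norm_of_nonneg (by norm_num)]
    exact mul_le_mul_of_nonneg_left (P.norm_deriv_two_apply_le H.toConvexMajorant
      hx.norm_sub_le haR (P.norm_newton_step_le H ha hx hs) le_rfl) (by norm_num)
  rw [halleyDenom]
  linarith [norm_le_add_norm_add (F' x w) ((2⁻¹ : ℝ) • F'' x p w)]

lemma norm_halley_step_le : ‖d‖ ≤ halleyStep h h' h'' a := by
  rw [halleyStep, le_div_iff₀' (H.halleyDenom_pos ha)]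
  calc halleyDenom h h' h'' a * ‖d‖ ≤ ‖F' x d + (2⁻¹ : ℝ) • F'' x p d‖ :=
        P.halleyDenom_mul_norm_le H ha hx hs d
    _ = ‖F x‖ := by rw [hs.halley, norm_neg]
    _ ≤ h a := hx.norm_apply_le

lemma norm_halley_sub_newton_le : ‖d - p‖ ≤ halleyStep h h' h'' a - newtonStep h h' a := by
  have haR := (H.mem_Ico_radius ha).2
  have hdiff : F' x (d - p) = -((2⁻¹ : ℝ) • F'' x p d) := by
    rw [map_sub, hs.newton, ← hs.halley]
    abel
  refine le_of_mul_le_mul_left ?_ (H.neg_deriv_pos ha)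
  calc -h' a * ‖d - p‖ ≤ ‖F' x (d - p)‖ :=
        P.neg_deriv_mul_norm_le H.toConvexMajorant hx.norm_sub_le haR _
    _ = 2⁻¹ * ‖F'' x p d‖ := by
        rw [hdiff, norm_neg, norm_smul, Real.norm_of_nonneg (by norm_num)]
    _ ≤ 2⁻¹ * (h'' a * newtonStep h h' a * halleyStep h h' h'' a) :=
        mul_le_mul_of_nonneg_left (P.norm_deriv_two_apply_le H.toConvexMajorant hx.norm_sub_le haR
          (P.norm_newton_step_le H ha hx hs) (P.norm_halley_step_le H ha hx hs)) (by norm_num)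
    _ = -h' a * (halleyStep h h' h'' a - newtonStep h h' a) :=
        (H.neg_deriv_mul_halleyStep_sub_newtonStep ha).symm

lemma norm_apply_add_halley_step_le : ‖F (x + d)‖ ≤ h (a + halleyStep h h' h'' a) := by
  have hda := P.norm_halley_step_le H ha hx hs
  have hnext := H.mem_Ico_radius (H.add_halleyStep_mem_Ico ha)
  have hexpand : F (x + d) = (2⁻¹ : ℝ) • F'' x (d - p) d +
      (F (x + d) - F x - F' x d - (2⁻¹ : ℝ) • F'' x d d) := by
    have hhalley : F' x d = -F x - (2⁻¹ : ℝ) • F'' x p d := eq_sub_of_add_eq hs.halley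
    rw [map_sub, sub_apply, smul_sub, hhalley]
    abel
  have hrem : taylorRemainder h h' h'' a ‖d‖ ≤
      taylorRemainder h h' h'' a (halleyStep h h' h'' a) :=
    H.taylorRemainder_mono ha.1 (norm_nonneg d) hda hnext.2
  rw [hexpand, H.apply_add_halleyStep ha]
  refine (norm_add_le _ _).trans (add_le_add ?_ ?_)
  · rw [norm_smul, Real.norm_of_nonneg (by norm_num)]
    exact mul_le_mul_of_nonneg_left (P.norm_deriv_two_apply_le H.toConvexMajorant hx.norm_sub_le
      (H.mem_Ico_radius ha).2 (P.norm_halley_sub_newton_le H ha hx hs) hda) (by norm_num)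
  · exact (P.norm_taylor_two_le H.toConvexMajorant hx.norm_sub_le
      (by linarith [hnext.2])).trans hrem

lemma isMajorizedAt_add_halley_step :
    IsMajorizedAt F x₀ h (x + d) (a + halleyStep h h' h'' a) where
  norm_sub_le := by
    rw [add_sub_right_comm]
    exact (norm_add_le _ _).trans
      (add_le_add hx.norm_sub_le (P.norm_halley_step_le H ha hx hs))
  norm_apply_le := P.norm_apply_add_halley_step_le H ha hx hs

lemma norm_zero_sub_newton_step_le (hε : ‖ε‖ ≤ T - a) (hzero : F (x + ε) = 0) :
    ‖ε - p‖ ≤ (‖ε‖ / (T - a)) ^ 2 * (T - a - newtonStep h h' a) := by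
  have haR := (H.mem_Ico_radius ha).2
  have hgap : 0 < T - a := sub_pos.2 ha.2
  have hrem := H.taylorRemainder_gap_nonneg ha
  set r := ‖ε‖ / (T - a)
  have hrε : ‖ε‖ = r * (T - a) := (div_mul_cancel₀ _ hgap.ne').symm
  have hr1 : r ≤ 1 := (div_le_one hgap).2 hε
  set Q := F (x + ε) - F x - F' x ε - (2⁻¹ : ℝ) • F'' x ε ε with hQ
  have hQle : ‖Q‖ ≤ r ^ 3 * taylorRemainder h h' h'' a (T - a) :=
    P.norm_taylor_two_le_div_cube_mul H ha hx.norm_sub_le hε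
  have hdiff : F' x (ε - p) = -((2⁻¹ : ℝ) • F'' x ε ε + Q) := by
    rw [map_sub, hs.newton, hQ, hzero]
    abel
  refine le_of_mul_le_mul_left ?_ (H.neg_deriv_pos ha)
  calc -h' a * ‖ε - p‖ ≤ ‖F' x (ε - p)‖ :=
        P.neg_deriv_mul_norm_le H.toConvexMajorant hx.norm_sub_le haR _
    _ ≤ 2⁻¹ * ‖F'' x ε ε‖ + ‖Q‖ := by
        rw [hdiff, norm_neg]
        exact (norm_add_le _ _).trans_eq (by rw [norm_smul, Real.norm_of_nonneg (by norm_num)])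
    _ ≤ 2⁻¹ * (h'' a * ‖ε‖ * ‖ε‖) + r ^ 3 * taylorRemainder h h' h'' a (T - a) :=
        add_le_add (mul_le_mul_of_nonneg_left (P.norm_deriv_two_apply_le H.toConvexMajorant
          hx.norm_sub_le haR le_rfl le_rfl) (by norm_num)) hQle
    _ ≤ 2⁻¹ * (h'' a * ‖ε‖ * ‖ε‖) + r ^ 2 * taylorRemainder h h' h'' a (T - a) := by
        gcongr _ + ?_ * _
        exact pow_le_pow_of_le_one (by positivity) hr1 (by norm_num)
    _ = -h' a * (r ^ 2 * (T - a - newtonStep h h' a)) := by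
        rw [hrε]
        linear_combination -r ^ 2 * H.neg_deriv_mul_gap_sub_newtonStep ha

lemma norm_zero_sub_halley_step_le (hε : ‖ε‖ ≤ T - a) (hzero : F (x + ε) = 0) :
    ‖ε - d‖ ≤ (T - (a + halleyStep h h' h'' a)) * (‖ε‖ / (T - a)) ^ 3 := by
  have haR := (H.mem_Ico_radius ha).2
  have hgap : 0 < T - a := sub_pos.2 ha.2
  have hnewton := P.norm_zero_sub_newton_step_le H ha hx hs hε hzero
  set r := ‖ε‖ / (T - a)
  have hrε : ‖ε‖ = r * (T - a) := (div_mul_cancel₀ _ hgap.ne').symm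
  set Q := F (x + ε) - F x - F' x ε - (2⁻¹ : ℝ) • F'' x ε ε with hQ
  have hQle : ‖Q‖ ≤ r ^ 3 * taylorRemainder h h' h'' a (T - a) :=
    P.norm_taylor_two_le_div_cube_mul H ha hx.norm_sub_le hε
  have hdiff : F' x (ε - d) + (2⁻¹ : ℝ) • F'' x p (ε - d) =
      -((2⁻¹ : ℝ) • F'' x (ε - p) ε + Q) := by
    have hhalley : F' x d = -F x - (2⁻¹ : ℝ) • F'' x p d := eq_sub_of_add_eq hs.halley
    simp only [map_sub, sub_apply, smul_sub, hhalley, hQ, hzero]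
    abel
  refine le_of_mul_le_mul_left ?_ (H.halleyDenom_pos ha)
  calc halleyDenom h h' h'' a * ‖ε - d‖ ≤ ‖F' x (ε - d) + (2⁻¹ : ℝ) • F'' x p (ε - d)‖ :=
        P.halleyDenom_mul_norm_le H ha hx hs _
    _ ≤ 2⁻¹ * ‖F'' x (ε - p) ε‖ + ‖Q‖ := by
        rw [hdiff, norm_neg]
        exact (norm_add_le _ _).trans_eq (by rw [norm_smul, Real.norm_of_nonneg (by norm_num)])
    _ ≤ 2⁻¹ * (h'' a * (r ^ 2 * (T - a - newtonStep h h' a)) * ‖ε‖) +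
          r ^ 3 * taylorRemainder h h' h'' a (T - a) :=
        add_le_add (mul_le_mul_of_nonneg_left (P.norm_deriv_two_apply_le H.toConvexMajorant
          hx.norm_sub_le haR hnewton le_rfl) (by norm_num)) hQle
    _ = halleyDenom h h' h'' a * ((T - (a + halleyStep h h' h'' a)) * r ^ 3) := by
        rw [hrε]
        linear_combination -r ^ 3 * H.halleyDenom_mul_next_gap ha

end IsMajorizedBy

lemma dist_le_sub_of_dist_succ_le {α : Type*} [PseudoMetricSpace α] {x : ℕ → α} {t : ℕ → ℝ}
    {xs : α} {T : ℝ} (hstep : ∀ k, dist (x k) (x (k + 1)) ≤ t (k + 1) - t k) (ht : ∀ k, t k ≤ T)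
    (hlim : Filter.Tendsto x Filter.atTop (nhds xs)) (k : ℕ) : dist (x k) xs ≤ T - t k := by
  refine le_of_tendsto (tendsto_const_nhds.dist hlim) ?_
  filter_upwards [Filter.eventually_ge_atTop k] with n hkn
  calc dist (x k) (x n) ≤ ∑ i ∈ Finset.Ico k n, (t (i + 1) - t i) :=
        dist_le_Ico_sum_of_dist_le hkn fun _ _ => hstep _
    _ = t n - t k := Finset.sum_Ico_sub t hkn
    _ ≤ T - t k := sub_le_sub_right (ht n) _

section HalleyMethod

variable {X Y : Type*} [NormedAddCommGroup X] [NormedSpace ℝ X] [NormedAddCommGroup Y]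
  [NormedSpace ℝ Y] {F : X → Y} {F' : X → X →L[ℝ] Y} {F'' : X → X →L[ℝ] X →L[ℝ] Y} {x₀ : X}
  {h h' h'' : ℝ → ℝ} {R T : ℝ} {t : ℕ → ℝ} {x p : ℕ → X}

lemma IsMajorizedBy.isMajorizedAt_iterate (P : IsMajorizedBy F F' F'' x₀ h h' h'' R)
    (H : HalleyMajorant h h' h'' R T) (ht0 : t 0 = 0)
    (ht : ∀ k, t (k + 1) = t k + halleyStep h h' h'' (t k)) (hx0 : x 0 = x₀)
    (hstep : ∀ k, IsHalleyStep F F' F'' (x k) (p k) (x (k + 1) - x k)) (k : ℕ) :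
    IsMajorizedAt F x₀ h (x k) (t k) := by
  induction k with
  | zero => exact ⟨by simp [hx0, ht0], by simpa [hx0, ht0] using P.norm_le⟩
  | succ k ih =>
    simpa [ht k] using
      P.isMajorizedAt_add_halley_step H (H.mem_Ico_of_recurrence ht0 ht k) ih (hstep k)

lemma IsMajorizedBy.norm_limit_sub_iterate_le (P : IsMajorizedBy F F' F'' x₀ h h' h'' R)
    (H : HalleyMajorant h h' h'' R T) (ht0 : t 0 = 0)
    (ht : ∀ k, t (k + 1) = t k + halleyStep h h' h'' (t k)) (hx0 : x 0 = x₀)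
    (hstep : ∀ k, IsHalleyStep F F' F'' (x k) (p k) (x (k + 1) - x k)) {xs : X}
    (hlim : Filter.Tendsto x Filter.atTop (nhds xs)) (k : ℕ) : ‖xs - x k‖ ≤ T - t k := by
  rw [← dist_eq_norm']
  refine dist_le_sub_of_dist_succ_le (fun k => ?_)
    (fun k => (H.mem_Ico_of_recurrence ht0 ht k).2.le) hlim k
  rw [dist_eq_norm', ht k, add_sub_cancel_left]
  exact P.norm_halley_step_le H (H.mem_Ico_of_recurrence ht0 ht k)
    (P.isMajorizedAt_iterate H ht0 ht hx0 hstep k) (hstep k)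

theorem halley_method_error_bounds_Q_cubic_general (H : HalleyMajorant h h' h'' R T)
    (P : IsMajorizedBy F F' F'' x₀ h h' h'' R) (ht0 : t 0 = 0)
    (ht : ∀ k, t (k + 1) = t k + halleyStep h h' h'' (t k)) (hx0 : x 0 = x₀)
    (hstep : ∀ k, IsHalleyStep F F' F'' (x k) (p k) (x (k + 1) - x k)) {xs : X}
    (hlim : Filter.Tendsto x Filter.atTop (nhds xs)) (hzero : F xs = 0) :
    (∀ k, ‖xs - x (k + 1)‖ ≤ (T - t (k + 1)) * (‖xs - x k‖ / (T - t k)) ^ 3) ∧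
    (∀ k, ‖xs - x (k + 1)‖ ≤
      (1 / 3 * (h'' T ^ 2 / h' T ^ 2) + 2 / 9 * (leftDerivSup h'' 0 T / -h' T)) *
        ‖xs - x k‖ ^ 3) := by
  have hmem := H.mem_Ico_of_recurrence ht0 ht
  have hbound : ∀ k, ‖xs - x (k + 1)‖ ≤ (T - t (k + 1)) * (‖xs - x k‖ / (T - t k)) ^ 3 := by
    intro k
    simpa [ht k] using P.norm_zero_sub_halley_step_le H (hmem k)
      (P.isMajorizedAt_iterate H ht0 ht hx0 hstep k) (hstep k)
      (P.norm_limit_sub_iterate_le H ht0 ht hx0 hstep hlim k) (by simpa using hzero)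
  refine ⟨hbound, fun k => (hbound k).trans ?_⟩
  have hgap : 0 < T - t k := sub_pos.2 (hmem k).2
  rw [div_pow, ← mul_div_assoc, div_le_iff₀ (by positivity), mul_right_comm, ht k]
  gcongr
  exact H.next_gap_le_cube (hmem k)

end HalleyMethod

section Preconditioning

variable {X Y Z : Type*} [NormedAddCommGroup X] [NormedSpace ℝ X] [NormedAddCommGroup Y]
  [NormedSpace ℝ Y] [NormedAddCommGroup Z] [NormedSpace ℝ Z] {F : X → Y} {F' : X → X →L[ℝ] Y}
  {F'' : X → X →L[ℝ] X →L[ℝ] Y} {x p d x₀ : X} {h h' h'' : ℝ → ℝ} {R : ℝ}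

lemma isHalleyStep_neg_symm_apply {e : X ≃L[ℝ] Y} {m : X ≃L[ℝ] X}
    (he : (e : X →L[ℝ] Y) = F' x)
    (hm : (m : X →L[ℝ] X) = ContinuousLinearMap.id ℝ X -
      (2⁻¹ : ℝ) • (e.symm : Y →L[ℝ] X).comp (F'' x (e.symm (F x)))) :
    IsHalleyStep F F' F'' x (-e.symm (F x)) (-m.symm (e.symm (F x))) := by
  have hF' : ∀ u, F' x u = e u := fun u => by rw [← he]; rfl
  set w := e.symm (F x) with hw
  set q := m.symm w with hq
  have hm_apply : q - (2⁻¹ : ℝ) • e.symm (F'' x w q) = w := by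
    simpa [hq] using (congrArg (fun A : X →L[ℝ] X => A q) hm).symm
  have he_apply : e q - (2⁻¹ : ℝ) • F'' x w q = F x := by
    simpa [hw] using congrArg e hm_apply
  refine ⟨by simp [hF', hw], ?_⟩
  simp only [hF', map_neg, neg_apply, neg_neg]
  rw [← he_apply]
  abel

lemma IsHalleyStep.comp_left (hs : IsHalleyStep F F' F'' x p d) (L : Y →L[ℝ] Z) :
    IsHalleyStep (fun y => L (F y)) (fun y => L.comp (F' y))
      (fun y => (ContinuousLinearMap.compL ℝ X Y Z L).comp (F'' y)) x p d where
  newton := by simp [hs.newton]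
  halley := by simpa using congrArg L hs.halley

lemma isMajorizedBy_symm_comp (hF : ∀ y ∈ ball x₀ R, HasFDerivAt F (F' y) y)
    (hF' : ∀ y ∈ ball x₀ R, HasFDerivAt F' (F'' y) y) {e : X ≃L[ℝ] Y}
    (he : (e : X →L[ℝ] Y) = F' x₀) (h'0 : h' 0 = -1)
    (hsub : ∀ x ∈ ball x₀ R, ∀ y ∈ ball x₀ R, ‖y - x‖ + ‖x - x₀‖ < R →
      ‖(ContinuousLinearMap.compL ℝ X Y X (e.symm : Y →L[ℝ] X)).comp (F'' y - F'' x)‖ ≤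
        h'' (‖y - x‖ + ‖x - x₀‖) - h'' ‖x - x₀‖)
    (h0 : ‖(e.symm : Y →L[ℝ] X) (F x₀)‖ ≤ h 0)
    (h''0 : ‖(ContinuousLinearMap.compL ℝ X Y X (e.symm : Y →L[ℝ] X)).comp (F'' x₀)‖ ≤ h'' 0) :
    IsMajorizedBy (fun y => (e.symm : Y →L[ℝ] X) (F y))
      (fun y => (e.symm : Y →L[ℝ] X).comp (F' y))
      (fun y => (ContinuousLinearMap.compL ℝ X Y X (e.symm : Y →L[ℝ] X)).comp (F'' y))
      x₀ h h' h'' R where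
  hasFDerivAt y hy := (e.symm : Y →L[ℝ] X).hasFDerivAt.comp y (hF y hy)
  hasFDerivAt' y hy :=
    (ContinuousLinearMap.compL ℝ X Y X (e.symm : Y →L[ℝ] X)).hasFDerivAt.comp y (hF' y hy)
  norm_deriv_two_sub_le x hx y hy hxy := by
    simpa only [ContinuousLinearMap.comp_sub] using hsub x hx y hy hxy
  norm_deriv_two_le := h''0
  le_norm_deriv u := by simp [h'0, ← he]
  norm_le := h0

end Preconditioning

/-- error bounds and Q-cubic convergence: under the hypotheses of
the semilocal convergence theorem for Halley's method, if `(x_k)` is the Halley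
sequence (with invertibility witnesses `e k`, `m k`), `(t_k)` the majorizing
sequence, and `xs` the limit of `(x_k)` (a zero of `F` in the closed ball of
radius `t*`), then `‖xs - x_{k+1}‖ ≤ (t* - t_{k+1})·(‖xs - x_k‖/(t* - t_k))³`
for all `k`, and consequently
`‖xs - x_{k+1}‖ ≤ [(1/3)·h''(t*)²/h'(t*)² + (2/9)·D⁻h''(t*)/(-h'(t*))]·‖xs - x_k‖³`
for all `k`, where `D⁻h''(t*)` is the left directional derivative of `h''` at `t*`. -/
theorem halley_method_error_bounds_Q_cubic
    {X Y : Type*} [NormedAddCommGroup X] [NormedSpace ℝ X] [CompleteSpace X]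
    [NormedAddCommGroup Y] [NormedSpace ℝ Y] [CompleteSpace Y]
    (D : Set X) (hD : IsOpen D) (hDconv : Convex ℝ D)
    (F : X → Y) (F' : X → X →L[ℝ] Y) (F'' : X → X →L[ℝ] X →L[ℝ] Y)
    (hdF : ∀ x ∈ D, HasFDerivAt F (F' x) x)
    (hdF' : ∀ x ∈ D, HasFDerivAt F' (F'' x) x)
    (hcF'' : ContinuousOn F'' D)
    (x₀ : X) (hx₀ : x₀ ∈ D)
    (e0 : X ≃L[ℝ] Y) (he0 : (e0 : X →L[ℝ] Y) = F' x₀)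
    (R : ℝ) (hR : 0 < R) (hballD : ball x₀ R ⊆ D)
    (h h1 h2 : ℝ → ℝ)
    (hd1 : ∀ s ∈ Ico (0:ℝ) R, HasDerivWithinAt h (h1 s) (Ico 0 R) s)
    (hd2 : ∀ s ∈ Ico (0:ℝ) R, HasDerivWithinAt h1 (h2 s) (Ico 0 R) s)
    (hc2 : ContinuousOn h2 (Ico 0 R))
    (hA1a : 0 < h 0) (hA1b : 0 < h2 0) (hA1c : h1 0 = -1)
    (hA2a : ConvexOn ℝ (Ico 0 R) h2) (hA2b : StrictMonoOn h2 (Ico 0 R))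
    (tstar : ℝ) (htsmem : tstar ∈ Ioo 0 R) (htszero : h tstar = 0)
    (htsmin : ∀ s ∈ Ioo (0:ℝ) R, h s = 0 → tstar ≤ s) (htsder : h1 tstar < 0)
    (hmaj : ∀ x ∈ ball x₀ R, ∀ y ∈ ball x₀ R, ‖y - x‖ + ‖x - x₀‖ < R →
      ‖(ContinuousLinearMap.compL ℝ X Y X (e0.symm : Y →L[ℝ] X)).comp
          (F'' y - F'' x)‖ ≤ h2 (‖y - x‖ + ‖x - x₀‖) - h2 ‖x - x₀‖)
    (hinit1 : ‖(e0.symm : Y →L[ℝ] X) (F x₀)‖ ≤ h 0)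
    (hinit2 : ‖(ContinuousLinearMap.compL ℝ X Y X (e0.symm : Y →L[ℝ] X)).comp
        (F'' x₀)‖ ≤ h2 0)
    (t : ℕ → ℝ) (ht0 : t 0 = 0)
    (hrec : ∀ k, t (k + 1) =
      t k - (1 / (1 - h (t k) * h2 (t k) / (2 * (h1 (t k)) ^ 2))) * (h (t k) / h1 (t k)))
    (x : ℕ → X) (e : ℕ → (X ≃L[ℝ] Y)) (m : ℕ → (X ≃L[ℝ] X))
    (hx0 : x 0 = x₀)
    (he : ∀ k, (e k : X →L[ℝ] Y) = F' (x k))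
    (hm : ∀ k, (m k : X →L[ℝ] X) = ContinuousLinearMap.id ℝ X -
      (2⁻¹ : ℝ) • (((e k).symm : Y →L[ℝ] X).comp
        ((F'' (x k)) ((e k).symm (F (x k))))))
    (hxrec : ∀ k, x (k + 1) = x k - (m k).symm ((e k).symm (F (x k))))
    (xs : X) (hxs : xs ∈ closedBall x₀ tstar)
    (hlim : Filter.Tendsto x Filter.atTop (nhds xs)) (hzero : F xs = 0) :
    (∀ k, ‖xs - x (k + 1)‖ ≤
        (tstar - t (k + 1)) * (‖xs - x k‖ / (tstar - t k)) ^ 3) ∧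
    (∀ k, ‖xs - x (k + 1)‖ ≤
        ((1 / 3) * ((h2 tstar) ^ 2 / (h1 tstar) ^ 2) +
          (2 / 9) * (sSup ((fun u => (h2 tstar - h2 u) / (tstar - u)) ''
            Ico (0:ℝ) tstar) / (-(h1 tstar)))) * ‖xs - x k‖ ^ 3) := by
  have H : HalleyMajorant h h1 h2 R tstar :=
    ⟨⟨hd1, hd2, hA2a, hA2b.monotoneOn, hA1b⟩, hA1a, htsmem, htszero, htsmin, htsder⟩
  have P := isMajorizedBy_symm_comp (fun y hy => hdF y (hballD hy))
    (fun y hy => hdF' y (hballD hy)) he0 hA1c hmaj hinit1 hinit2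
  have ht : ∀ k, t (k + 1) = t k + halleyStep h h1 h2 (t k) := fun k =>
    (hrec k).trans (sub_halley_correction_eq_add_halleyStep h h1 h2 (t k))
  have hstep : ∀ k, IsHalleyStep F F' F'' (x k) (-(e k).symm (F (x k))) (x (k + 1) - x k) := by
    intro k
    rw [hxrec k, sub_sub_cancel_left]
    exact isHalleyStep_neg_symm_apply (he k) (hm k)
  exact halley_method_error_bounds_Q_cubic_general H P ht0 ht hx0
    (fun k => (hstep k).comp_left _) hlim (by simp [hzero])
end

section
/- Under the hypotheses of the semilocal convergence theorem for Halley's method (F : D → Y twice continuously Fréchet differentiable between Banach spaces, x₀ ∈ D with F'(x₀) invertible, h : [0,R) → ℝ a majorizing function to F at x₀ satisfying (A1)–(A3) with smallest zero t*), the limit x* of the Halley sequence is the unique zero of F in the open ball B(x₀,ρ), where ρ := sup{t ∈ [t*,R) : h(t) ≤ 0}. -/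
open Metric Set

/-!
The simplified Newton map `G w = w - F'(x₀)⁻¹ F w` has the zeros of `F` as fixed points, and it is
majorized in the sense of Kantorovich by `g t = t + h t`: integrating the bound on `F'(x₀)⁻¹ F''`
twice bounds the increments of `G` by those of `g`. Hence a fixed point `w` of `G` with
`‖w - x₀‖ ≤ s` satisfies `‖w - Gⁿ x₀‖ ≤ gⁿ s - gⁿ 0`. If `s < ρ`, convexity of `h` and `h'(t*) < 0`
make `t*` the only fixed point of `g` in `[0, s]`, so both scalar sequences converge to `t*` and
`Gⁿ x₀` converges to `w`. Limits being unique, `F` has at most one zero in the open ball of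
radius `ρ`.
-/

section ScalarIteration

open Filter Topology OrderDual

variable {α : Type*} [ConditionallyCompleteLinearOrder α] [TopologicalSpace α] [OrderTopology α]
  {g : α → α} {a b c : α}

lemma tendsto_iterate_left_of_unique_fixedPt (hab : a ≤ b) (hmono : MonotoneOn g (Icc a b))
    (hcont : ContinuousOn g (Icc a b)) (hmaps : MapsTo g (Icc a b) (Icc a b))
    (huniq : ∀ t ∈ Icc a b, g t = t → t = c) :
    Tendsto (fun n => g^[n] a) atTop (𝓝 c) := by
  have hmem (n : ℕ) : g^[n] a ∈ Icc a b := hmaps.iterate n (left_mem_Icc.2 hab)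
  have hincr : Monotone fun n => g^[n] a := by
    refine monotone_nat_of_le_succ fun n => ?_
    induction n with
    | zero => exact (hmem 1).1
    | succ n ih =>
      simp only [Function.iterate_succ_apply'] at ih ⊢
      exact hmono (hmem n) (hmaps (hmem n)) ih
  have hlim := tendsto_atTop_ciSup hincr ⟨b, forall_mem_range.2 fun n => (hmem n).2⟩
  set L := ⨆ n, g^[n] a
  have hL : L ∈ Icc a b := isClosed_Icc.mem_of_tendsto hlim (Eventually.of_forall hmem)
  have hgL : Tendsto (fun n => g^[n + 1] a) atTop (𝓝 (g L)) := by
    simp only [Function.iterate_succ_apply']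
    exact (hcont L hL).tendsto.comp
      (tendsto_nhdsWithin_iff.2 ⟨hlim, Eventually.of_forall hmem⟩)
  have hfix : g L = L := tendsto_nhds_unique hgL ((tendsto_add_atTop_iff_nat 1).2 hlim)
  rwa [huniq L hL hfix] at hlim

lemma tendsto_iterate_right_of_unique_fixedPt (hab : a ≤ b) (hmono : MonotoneOn g (Icc a b))
    (hcont : ContinuousOn g (Icc a b)) (hmaps : MapsTo g (Icc a b) (Icc a b))
    (huniq : ∀ t ∈ Icc a b, g t = t → t = c) :
    Tendsto (fun n => g^[n] b) atTop (𝓝 c) := by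
  refine tendsto_iterate_left_of_unique_fixedPt (g := toDual ∘ g ∘ ofDual) (a := toDual b)
    (b := toDual a) (c := toDual c) hab ?_ ?_ ?_ ?_ <;> rw [Icc_toDual]
  exacts [hmono.dual, hcont, hmaps, huniq]

end ScalarIteration

section ConvexDecreasing

variable {f : ℝ → ℝ} {f' b c t : ℝ} {S : Set ℝ}

lemma convexOn_Ico_of_hasDerivWithinAt {f₁ : ℝ → ℝ} {a : ℝ}
    (hf : ∀ s ∈ Ico a b, HasDerivWithinAt f (f₁ s) (Ico a b) s) (hmono : MonotoneOn f₁ (Ico a b)) :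
    ConvexOn ℝ (Ico a b) f := by
  have hderiv : ∀ s ∈ Ioo a b, HasDerivAt f (f₁ s) s := fun s hs =>
    (hf s (Ioo_subset_Ico_self hs)).hasDerivAt (Ico_mem_nhds hs.1 hs.2)
  refine MonotoneOn.convexOn_of_deriv (convex_Ico a b) (fun s hs => (hf s hs).continuousWithinAt)
    ?_ ?_ <;> rw [interior_Ico]
  · exact fun s hs => (hderiv s hs).differentiableAt.differentiableWithinAt
  · exact (hmono.mono Ioo_subset_Ico_self).congr fun s hs => (hderiv s hs).deriv.symm

lemma exists_mem_Ioo_lt_of_hasDerivWithinAt_neg (hf : HasDerivWithinAt f f' (Ioi c) c)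
    (hf' : f' < 0) (hcb : c < b) : ∃ p ∈ Ioo c b, f p < f c := by
  obtain ⟨p, hslope, hp⟩ :=
    ((hf.limsup_slope_le' self_notMem_Ioi hf').and (Ioo_mem_nhdsGT hcb)).exists
  exact ⟨p, hp, (slope_neg_iff_of_le hp.1.le).1 hslope⟩

lemma lt_left_of_convexOn_of_hasDerivWithinAt_neg (hconv : ConvexOn ℝ S f)
    (hf : HasDerivWithinAt f f' (Ioi c) c) (hf' : f' < 0) (ht : t ∈ S) (htc : t < c)
    (hb : b ∈ S) (hcb : c < b) : f c < f t := by
  obtain ⟨p, ⟨hcp, hpb⟩, hp⟩ := exists_mem_Ioo_lt_of_hasDerivWithinAt_neg hf hf' hcb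
  have hpS : p ∈ S := hconv.1.ordConnected.out ht hb ⟨(htc.trans hcp).le, hpb.le⟩
  exact hconv.lt_left_of_right_lt ht hpS (Ioo_subset_openSegment ⟨htc, hcp⟩) hp

lemma lt_of_mem_Ioo_of_convexOn_of_hasDerivWithinAt_neg (hconv : ConvexOn ℝ S f)
    (hf : HasDerivWithinAt f f' (Ioi c) c) (hf' : f' < 0) (hc : c ∈ S) (hb : b ∈ S)
    (hbc : f b ≤ f c) (ht : t ∈ Ioo c b) : f t < f c := by
  obtain ⟨hct, htb⟩ := ht
  obtain ⟨p, ⟨hcp, hpt⟩, hp⟩ := exists_mem_Ioo_lt_of_hasDerivWithinAt_neg hf hf' hct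
  have hpS : p ∈ S := hconv.1.ordConnected.out hc hb ⟨hcp.le, (hpt.trans htb).le⟩
  by_contra! hle
  exact (hconv.lt_right_of_left_lt hpS hb (Ioo_subset_openSegment ⟨hpt, htb⟩)
    (hp.trans_le hle)).not_ge (hbc.trans hle)

variable {h : ℝ → ℝ} {h' a R r z : ℝ}

lemma lt_sSup_nonpos (hz : z < R) (hz0 : h z = 0) (hder : HasDerivWithinAt h h' (Ioi z) z)
    (hneg : h' < 0) : z < sSup {s | s ∈ Ico z R ∧ h s ≤ 0} := by
  obtain ⟨p, hp, hhp⟩ := exists_mem_Ioo_lt_of_hasDerivWithinAt_neg hder hneg hz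
  exact hp.1.trans_le <| le_csSup ⟨R, fun s hs => hs.1.2.le⟩
    ⟨Ioo_subset_Ico_self hp, hhp.le.trans_eq hz0⟩

lemma exists_nonpos_unique_zero_of_lt_sSup (hconv : ConvexOn ℝ (Ico a R) h) (hz : z ∈ Ico a R)
    (hz0 : h z = 0) (hder : HasDerivWithinAt h h' (Ioi z) z) (hneg : h' < 0)
    (hr : r < sSup {s | s ∈ Ico z R ∧ h s ≤ 0}) :
    ∃ s ∈ Ico z R, r ≤ s ∧ h s ≤ 0 ∧ ∀ t ∈ Icc a s, h t = 0 → t = z := by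
  obtain ⟨q, ⟨⟨-, hqR⟩, hhq⟩, hmax⟩ := exists_lt_of_lt_csSup
    (s := {s | s ∈ Ico z R ∧ h s ≤ 0}) ⟨z, left_mem_Ico.2 hz.2, hz0.le⟩
    (max_lt (lt_sSup_nonpos hz.2 hz0 hder hneg) hr)
  obtain ⟨hzq, -⟩ := max_lt_iff.1 hmax
  have hq : q ∈ Ico a R := ⟨hz.1.trans hzq.le, hqR⟩
  have hright (t : ℝ) (ht : t ∈ Ioo z q) : h t < 0 :=
    hz0 ▸ lt_of_mem_Ioo_of_convexOn_of_hasDerivWithinAt_neg hconv hder hneg hz hq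
      (hhq.trans_eq hz0.symm) ht
  refine ⟨max z r, ⟨le_max_left z r, hmax.trans hqR⟩, le_max_right z r, ?_, fun t ht ht0 => ?_⟩
  · rcases (le_max_left z r).eq_or_lt with heq | hlt
    exacts [(heq ▸ hz0).le, (hright _ ⟨hlt, hmax⟩).le]
  · rcases lt_trichotomy t z with htz | rfl | hzt
    · have htR : t ∈ Ico a R := ⟨ht.1, htz.trans hz.2⟩
      have := lt_left_of_convexOn_of_hasDerivWithinAt_neg hconv hder hneg htR htz hq hzq
      linarith
    · rfl
    · exact absurd ht0 (hright t ⟨hzt, ht.2.trans_lt hmax⟩).ne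

end ConvexDecreasing

section Majorant

variable {X E : Type*} [NormedAddCommGroup X] [NormedAddCommGroup E]

/-- Kantorovich's majorization: near `x₀` the increments of `φ` are bounded by those of the scalar
function `k`. Letting `a` and `b - a` be upper bounds for `‖v - x₀‖` and `‖u - v‖`, not their exact
values, is what makes the estimate pass to iterates and forces `k` to be monotone. -/
def IsMajorizedBy_s13 (φ : X → E) (k : ℝ → ℝ) (x₀ : X) (R : ℝ) : Prop :=
  ∀ ⦃u v : X⦄ ⦃a b : ℝ⦄, 0 ≤ a → ‖v - x₀‖ ≤ a → ‖u - v‖ ≤ b - a → b < R →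
    ‖φ u - φ v‖ ≤ k b - k a

namespace IsMajorizedBy_s13

open Filter Topology

variable {φ : X → E} {k k' : ℝ → ℝ} {x₀ : X} {R : ℝ}

lemma monotoneOn (hφ : IsMajorizedBy_s13 φ k x₀ R) : MonotoneOn k (Ico 0 R) := by
  intro a ha b hb hab
  have := hφ (u := x₀) (v := x₀) ha.1 (by simpa using ha.1) (by simpa using hab) hb.2
  simpa using this

lemma norm_sub_base_le (hφ : IsMajorizedBy_s13 φ k x₀ R) {w : X} {b : ℝ} (hw : ‖w - x₀‖ ≤ b)
    (hb : b < R) : ‖φ w - φ x₀‖ ≤ k b - k 0 :=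
  hφ le_rfl (by simp) (by simpa using hw) hb

lemma of_norm_fderiv_le [NormedSpace ℝ X] [NormedSpace ℝ E] {φ' : X → X →L[ℝ] E}
    (hφ : ∀ w ∈ ball x₀ R, HasFDerivAt φ (φ' w) w)
    (hk : ∀ s ∈ Ico 0 R, HasDerivWithinAt k (k' s) (Ico 0 R) s)
    (hmono : MonotoneOn k' (Ico 0 R)) (hbound : ∀ w ∈ ball x₀ R, ‖φ' w‖ ≤ k' ‖w - x₀‖) :
    IsMajorizedBy_s13 φ k x₀ R := by
  intro u v a b ha hva huv hbR
  have hab : 0 ≤ b - a := (norm_nonneg _).trans huv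
  let p : ℝ → X := AffineMap.lineMap v u
  let q : ℝ → ℝ := AffineMap.lineMap a b
  have hq : MapsTo q (Icc 0 1) (Ico 0 R) := fun τ hτ =>
    (convex_Ico 0 R).lineMap_mem ⟨ha, by linarith⟩ ⟨by linarith, hbR⟩ hτ
  have hpq : ∀ τ ∈ Icc (0 : ℝ) 1, ‖p τ - x₀‖ ≤ q τ := by
    rintro τ ⟨hτ0, -⟩
    calc ‖p τ - x₀‖ ≤ ‖p τ - v‖ + ‖v - x₀‖ := norm_sub_le_norm_sub_add_norm_sub ..
      _ = τ * ‖u - v‖ + ‖v - x₀‖ := by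
        rw [← dist_eq_norm, dist_lineMap_left, Real.norm_of_nonneg hτ0, dist_comm, dist_eq_norm]
      _ ≤ τ * (b - a) + a := by gcongr
      _ = q τ := by simp [q, AffineMap.lineMap_apply]
  have hball : ∀ τ ∈ Icc (0 : ℝ) 1, p τ ∈ ball x₀ R := fun τ hτ =>
    mem_ball_iff_norm.2 ((hpq τ hτ).trans_lt (hq hτ).2)
  have hφp : ∀ τ ∈ Icc (0 : ℝ) 1, HasDerivAt (fun τ => φ (p τ) - φ v) (φ' (p τ) (u - v)) τ :=
    fun τ hτ => ((hφ _ (hball τ hτ)).comp_hasDerivAt τ AffineMap.hasDerivAt_lineMap).sub_const _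
  have hkq : ∀ τ ∈ Icc (0 : ℝ) 1,
      HasDerivWithinAt (fun τ => k (q τ) - k a) (k' (q τ) * (b - a)) (Icc 0 1) τ :=
    fun τ hτ => ((hk _ (hq hτ)).comp τ AffineMap.hasDerivWithinAt_lineMap hq).sub_const _
  have hderiv : ∀ τ ∈ Icc (0 : ℝ) 1, ‖φ' (p τ) (u - v)‖ ≤ k' (q τ) * (b - a) := fun τ hτ =>
    (φ' (p τ)).le_of_opNorm_le_of_le ((hbound _ (hball τ hτ)).trans <|
      hmono ⟨norm_nonneg _, mem_ball_iff_norm.1 (hball τ hτ)⟩ (hq hτ) (hpq τ hτ)) huv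
  have key := image_norm_le_of_norm_deriv_right_le_deriv_boundary'
    (fun τ hτ => (hφp τ hτ).continuousAt.continuousWithinAt)
    (fun τ hτ => (hφp τ (Ico_subset_Icc_self hτ)).hasDerivWithinAt)
    (by simp [p, q]) (fun τ hτ => (hkq τ hτ).continuousWithinAt)
    (fun τ hτ => (hkq τ (Ico_subset_Icc_self hτ)).mono_of_mem_nhdsWithin (Icc_mem_nhdsGE_of_mem hτ))
    (fun τ hτ => hderiv τ (Ico_subset_Icc_self hτ)) (right_mem_Icc.2 zero_le_one)
  simpa [p, q] using key

variable {G : X → X} {g : ℝ → ℝ} {s : ℝ} {w : X}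

lemma mapsTo_Icc (hG : IsMajorizedBy_s13 G g x₀ R) (hG₀ : ‖G x₀ - x₀‖ ≤ g 0) (hsR : s < R)
    (hgs : g s ≤ s) : MapsTo g (Icc 0 s) (Icc 0 s) := by
  intro t ht
  have hs : s ∈ Ico 0 R := ⟨ht.1.trans ht.2, hsR⟩
  have htR : t ∈ Ico 0 R := ⟨ht.1, ht.2.trans_lt hsR⟩
  have h0R : (0 : ℝ) ∈ Ico 0 R := left_mem_Ico.2 (hs.1.trans_lt hsR)
  exact ⟨(norm_nonneg _).trans (hG₀.trans (hG.monotoneOn h0R htR ht.1)),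
    (hG.monotoneOn htR hs ht.2).trans hgs⟩

lemma norm_iterate_sub_base_le (hG : IsMajorizedBy_s13 G g x₀ R) (hG₀ : ‖G x₀ - x₀‖ ≤ g 0)
    (hs : 0 ≤ s) (hsR : s < R) (hgs : g s ≤ s) (n : ℕ) : ‖G^[n] x₀ - x₀‖ ≤ g^[n] 0 := by
  induction n with
  | zero => simp
  | succ n ih =>
    have ht := (hG.mapsTo_Icc hG₀ hsR hgs).iterate n (left_mem_Icc.2 hs)
    simp only [Function.iterate_succ_apply']
    calc ‖G (G^[n] x₀) - x₀‖ ≤ ‖G (G^[n] x₀) - G x₀‖ + ‖G x₀ - x₀‖ :=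
          norm_sub_le_norm_sub_add_norm_sub ..
      _ ≤ (g (g^[n] 0) - g 0) + g 0 := add_le_add (hG.norm_sub_base_le ih (ht.2.trans_lt hsR)) hG₀
      _ = g (g^[n] 0) := sub_add_cancel ..

lemma norm_isFixedPt_sub_iterate_le (hG : IsMajorizedBy_s13 G g x₀ R) (hG₀ : ‖G x₀ - x₀‖ ≤ g 0)
    (hsR : s < R) (hgs : g s ≤ s) (hw : Function.IsFixedPt G w) (hws : ‖w - x₀‖ ≤ s) (n : ℕ) :
    ‖w - G^[n] x₀‖ ≤ g^[n] s - g^[n] 0 := by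
  have hs : 0 ≤ s := (norm_nonneg _).trans hws
  induction n with
  | zero => simpa using hws
  | succ n ih =>
    have hmaps := (hG.mapsTo_Icc hG₀ hsR hgs).iterate n
    have step := hG (hmaps (left_mem_Icc.2 hs)).1 (hG.norm_iterate_sub_base_le hG₀ hs hsR hgs n) ih
      ((hmaps (right_mem_Icc.2 hs)).2.trans_lt hsR)
    simpa only [Function.iterate_succ_apply', hw.eq] using step

theorem tendsto_iterate_isFixedPt (hG : IsMajorizedBy_s13 G g x₀ R) (hG₀ : ‖G x₀ - x₀‖ ≤ g 0)
    (hcont : ContinuousOn g (Ico 0 R)) (hsR : s < R) (hgs : g s ≤ s) {c : ℝ}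
    (huniq : ∀ t ∈ Icc 0 s, g t = t → t = c) (hw : Function.IsFixedPt G w)
    (hws : ‖w - x₀‖ ≤ s) : Tendsto (fun n => G^[n] x₀) atTop (𝓝 w) := by
  have hs : 0 ≤ s := (norm_nonneg _).trans hws
  have hsub : Icc 0 s ⊆ Ico 0 R := Icc_subset_Ico_right hsR
  have hmono := hG.monotoneOn.mono hsub
  have hmaps := hG.mapsTo_Icc hG₀ hsR hgs
  have hgap : Tendsto (fun n => g^[n] s - g^[n] 0) atTop (𝓝 (c - c)) :=
    (tendsto_iterate_right_of_unique_fixedPt hs hmono (hcont.mono hsub) hmaps huniq).sub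
      (tendsto_iterate_left_of_unique_fixedPt hs hmono (hcont.mono hsub) hmaps huniq)
  rw [sub_self] at hgap
  refine tendsto_iff_norm_sub_tendsto_zero.2
    (squeeze_zero (fun n => norm_nonneg _) (fun n => ?_) hgap)
  rw [norm_sub_rev]
  exact hG.norm_isFixedPt_sub_iterate_le hG₀ hsR hgs hw hws n

end IsMajorizedBy_s13

end Majorant

section SimplifiedNewton

variable {X Y : Type*} [NormedAddCommGroup X] [NormedSpace ℝ X]
  [NormedAddCommGroup Y] [NormedSpace ℝ Y]

/-- The simplified Newton map of `F`; `A` stands for the inverse derivative of `F` at the base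
point, and a left inverse suffices. -/
def simplifiedNewton (A : Y →L[ℝ] X) (F : X → Y) (w : X) : X :=
  w - A (F w)

variable {F : X → Y} {F' : X → X →L[ℝ] Y} {F'' : X → X →L[ℝ] X →L[ℝ] Y} {A : Y →L[ℝ] X}
  {x₀ : X} {R : ℝ} {h h1 h2 : ℝ → ℝ}

lemma isFixedPt_simplifiedNewton {w : X} (hw : F w = 0) :
    Function.IsFixedPt (simplifiedNewton A F) w := by
  simp [Function.IsFixedPt, simplifiedNewton, hw]

lemma hasFDerivAt_simplifiedNewton {L : X →L[ℝ] Y} {w : X} (hF : HasFDerivAt F L w) :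
    HasFDerivAt (simplifiedNewton A F) (.id ℝ X - A.comp L) w :=
  (hasFDerivAt_id w).sub (A.hasFDerivAt.comp w hF)

lemma norm_comp_le_of_norm_comp_sub_le
    (hmaj : ∀ x ∈ ball x₀ R, ∀ y ∈ ball x₀ R, ‖y - x‖ + ‖x - x₀‖ < R →
      ‖(ContinuousLinearMap.compL ℝ X Y X A).comp (F'' y - F'' x)‖ ≤
        h2 (‖y - x‖ + ‖x - x₀‖) - h2 ‖x - x₀‖)
    (hinit : ‖(ContinuousLinearMap.compL ℝ X Y X A).comp (F'' x₀)‖ ≤ h2 0) :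
    ∀ w ∈ ball x₀ R, ‖(ContinuousLinearMap.compL ℝ X Y X A).comp (F'' w)‖ ≤ h2 ‖w - x₀‖ := by
  intro w hw
  have hsub := hmaj x₀ (mem_ball_self (pos_of_mem_ball hw)) w hw
    (by simpa using mem_ball_iff_norm.1 hw)
  simp only [ContinuousLinearMap.comp_sub, sub_self, norm_zero, add_zero] at hsub
  linarith [norm_le_norm_add_norm_sub' ((ContinuousLinearMap.compL ℝ X Y X A).comp (F'' w))
    ((ContinuousLinearMap.compL ℝ X Y X A).comp (F'' x₀))]

lemma isMajorizedBy_comp_fderiv (hF' : ∀ w ∈ ball x₀ R, HasFDerivAt F' (F'' w) w)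
    (hh1 : ∀ s ∈ Ico 0 R, HasDerivWithinAt h1 (h2 s) (Ico 0 R) s)
    (hmono : MonotoneOn h2 (Ico 0 R))
    (hbound : ∀ w ∈ ball x₀ R,
      ‖(ContinuousLinearMap.compL ℝ X Y X A).comp (F'' w)‖ ≤ h2 ‖w - x₀‖) :
    IsMajorizedBy_s13 (fun w => A.comp (F' w)) h1 x₀ R :=
  .of_norm_fderiv_le
    (fun w hw => (ContinuousLinearMap.compL ℝ X Y X A).hasFDerivAt.comp w (hF' w hw))
    hh1 hmono hbound

lemma isMajorizedBy_simplifiedNewton (hF : ∀ w ∈ ball x₀ R, HasFDerivAt F (F' w) w)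
    (hA : A.comp (F' x₀) = .id ℝ X)
    (hh : ∀ s ∈ Ico 0 R, HasDerivWithinAt h (h1 s) (Ico 0 R) s) (hh1 : -1 ≤ h1 0)
    (hmaj : IsMajorizedBy_s13 (fun w => A.comp (F' w)) h1 x₀ R) :
    IsMajorizedBy_s13 (simplifiedNewton A F) (fun t => t + h t) x₀ R := by
  refine .of_norm_fderiv_le (φ' := fun w => .id ℝ X - A.comp (F' w)) (k' := fun t => 1 + h1 t)
    (fun w hw => hasFDerivAt_simplifiedNewton (hF w hw))
    (fun s hs => (hasDerivWithinAt_id s _).add (hh s hs)) (hmaj.monotoneOn.const_add 1)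
    fun w hw => ?_
  have hw' := hmaj.norm_sub_base_le le_rfl (mem_ball_iff_norm.1 hw)
  rw [hA, norm_sub_rev] at hw'
  linarith

theorem halley_method_uniqueness_general
    (hF : ∀ w ∈ ball x₀ R, HasFDerivAt F (F' w) w)
    (hF' : ∀ w ∈ ball x₀ R, HasFDerivAt F' (F'' w) w)
    (hA : A.comp (F' x₀) = .id ℝ X)
    (hh : ∀ s ∈ Ico 0 R, HasDerivWithinAt h (h1 s) (Ico 0 R) s)
    (hh1 : ∀ s ∈ Ico 0 R, HasDerivWithinAt h1 (h2 s) (Ico 0 R) s)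
    (hh1_zero : -1 ≤ h1 0) (hmono : MonotoneOn h2 (Ico 0 R))
    {tstar : ℝ} (htstar : tstar ∈ Ico 0 R) (hzero : h tstar = 0) (hneg : h1 tstar < 0)
    (hbound : ∀ w ∈ ball x₀ R,
      ‖(ContinuousLinearMap.compL ℝ X Y X A).comp (F'' w)‖ ≤ h2 ‖w - x₀‖)
    (hinit : ‖A (F x₀)‖ ≤ h 0) {xs : X} (hxs : xs ∈ closedBall x₀ tstar) (hFxs : F xs = 0) :
    xs ∈ ball x₀ (sSup {s | s ∈ Ico tstar R ∧ h s ≤ 0}) ∧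
    ∀ y ∈ ball x₀ (sSup {s | s ∈ Ico tstar R ∧ h s ≤ 0}), F y = 0 → y = xs := by
  have hcont : ContinuousOn h (Ico 0 R) := fun s hs => (hh s hs).continuousWithinAt
  have hmaj1 := isMajorizedBy_comp_fderiv hF' hh1 hmono hbound
  have hmaj := isMajorizedBy_simplifiedNewton hF hA hh hh1_zero hmaj1
  have hconv : ConvexOn ℝ (Ico 0 R) h :=
    convexOn_Ico_of_hasDerivWithinAt hh hmaj1.monotoneOn
  have hder : HasDerivWithinAt h (h1 tstar) (Ioi tstar) tstar :=
    (hh tstar htstar).mono_of_mem_nhdsWithin (Ico_mem_nhdsGT_of_mem htstar)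
  refine ⟨closedBall_subset_ball (lt_sSup_nonpos htstar.2 hzero hder hneg) hxs, fun y hy hFy => ?_⟩
  obtain ⟨s, hs, hys, hhs, huniq⟩ :=
    exists_nonpos_unique_zero_of_lt_sSup hconv htstar hzero hder hneg (mem_ball_iff_norm.1 hy)
  have hlim {w : X} (hFw : F w = 0) (hws : ‖w - x₀‖ ≤ s) :=
    hmaj.tendsto_iterate_isFixedPt (by simpa [simplifiedNewton] using hinit)
      (continuousOn_id.add hcont) hs.2 (by simpa using hhs)
      (fun t ht hgt => huniq t ht (by simpa using hgt)) (isFixedPt_simplifiedNewton hFw) hws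
  exact tendsto_nhds_unique (hlim hFy hys) (hlim hFxs ((mem_closedBall_iff_norm.1 hxs).trans hs.1))

end SimplifiedNewton

/-- uniqueness: under the hypotheses of the semilocal convergence
theorem for Halley's method, the limit `xs` of the Halley sequence `(x_k)` is
the unique zero of `F` in the open ball `B(x₀,ρ)`, where
`ρ = sup {s ∈ [t*,R) : h(s) ≤ 0}`. -/
theorem halley_method_uniqueness
    {X Y : Type*} [NormedAddCommGroup X] [NormedSpace ℝ X] [CompleteSpace X]
    [NormedAddCommGroup Y] [NormedSpace ℝ Y] [CompleteSpace Y]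
    (D : Set X) (hD : IsOpen D) (hDconv : Convex ℝ D)
    (F : X → Y) (F' : X → X →L[ℝ] Y) (F'' : X → X →L[ℝ] X →L[ℝ] Y)
    (hdF : ∀ x ∈ D, HasFDerivAt F (F' x) x)
    (hdF' : ∀ x ∈ D, HasFDerivAt F' (F'' x) x)
    (hcF'' : ContinuousOn F'' D)
    (x₀ : X) (hx₀ : x₀ ∈ D)
    (e0 : X ≃L[ℝ] Y) (he0 : (e0 : X →L[ℝ] Y) = F' x₀)
    (R : ℝ) (hR : 0 < R) (hballD : ball x₀ R ⊆ D)
    (h h1 h2 : ℝ → ℝ)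
    (hd1 : ∀ s ∈ Ico (0:ℝ) R, HasDerivWithinAt h (h1 s) (Ico 0 R) s)
    (hd2 : ∀ s ∈ Ico (0:ℝ) R, HasDerivWithinAt h1 (h2 s) (Ico 0 R) s)
    (hc2 : ContinuousOn h2 (Ico 0 R))
    (hA1a : 0 < h 0) (hA1b : 0 < h2 0) (hA1c : h1 0 = -1)
    (hA2a : ConvexOn ℝ (Ico 0 R) h2) (hA2b : StrictMonoOn h2 (Ico 0 R))
    (tstar : ℝ) (htsmem : tstar ∈ Ioo 0 R) (htszero : h tstar = 0)
    (htsmin : ∀ s ∈ Ioo (0:ℝ) R, h s = 0 → tstar ≤ s) (htsder : h1 tstar < 0)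
    (hmaj : ∀ x ∈ ball x₀ R, ∀ y ∈ ball x₀ R, ‖y - x‖ + ‖x - x₀‖ < R →
      ‖(ContinuousLinearMap.compL ℝ X Y X (e0.symm : Y →L[ℝ] X)).comp
          (F'' y - F'' x)‖ ≤ h2 (‖y - x‖ + ‖x - x₀‖) - h2 ‖x - x₀‖)
    (hinit1 : ‖(e0.symm : Y →L[ℝ] X) (F x₀)‖ ≤ h 0)
    (hinit2 : ‖(ContinuousLinearMap.compL ℝ X Y X (e0.symm : Y →L[ℝ] X)).comp
        (F'' x₀)‖ ≤ h2 0)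
    (x : ℕ → X) (e : ℕ → (X ≃L[ℝ] Y)) (m : ℕ → (X ≃L[ℝ] X))
    (hx0 : x 0 = x₀)
    (he : ∀ k, (e k : X →L[ℝ] Y) = F' (x k))
    (hm : ∀ k, (m k : X →L[ℝ] X) = ContinuousLinearMap.id ℝ X -
      (2⁻¹ : ℝ) • (((e k).symm : Y →L[ℝ] X).comp
        ((F'' (x k)) ((e k).symm (F (x k))))))
    (hxrec : ∀ k, x (k + 1) = x k - (m k).symm ((e k).symm (F (x k))))
    (xs : X) (hxs : xs ∈ closedBall x₀ tstar)
    (hlim : Filter.Tendsto x Filter.atTop (nhds xs)) (hzero : F xs = 0) :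
    xs ∈ ball x₀ (sSup {s | s ∈ Ico tstar R ∧ h s ≤ 0}) ∧
    ∀ y ∈ ball x₀ (sSup {s | s ∈ Ico tstar R ∧ h s ≤ 0}), F y = 0 → y = xs :=
  halley_method_uniqueness_general (A := (e0.symm : Y →L[ℝ] X))
    (fun w hw => hdF w (hballD hw)) (fun w hw => hdF' w (hballD hw)) (by ext v; simp [← he0])
    hd1 hd2 hA1c.ge hA2b.monotoneOn (Ioo_subset_Ico_self htsmem) htszero htsder
    (norm_comp_le_of_norm_comp_sub_le hmaj hinit2) hinit1 hxs hzero
end
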